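/- Let (U,ρ) be a complete metric space, let g ∈ W(ℝ,U), let p ≥ 1, and let F ∈ W_p(ℝ, cl_b U). Then for any increasing function η : [0,+∞) → [0,+∞) with η(0) = 0 and η(t) > 0 for every t > 0, there exists a function f ∈ W_p(ℝ,U) such that Mod f ⊆ Mod g + Mod F, f(t) ∈ F(t) for a.e. t ∈ ℝ, and ρ(f(t), g(t)) ≤ ρ(g(t), F(t)) + η(ρ(g(t), F(t))) for a.e. t ∈ ℝ (where ρ(x,A) = inf_{y∈A} ρ(x,y)). -/

import Mathlib

open MeasureTheory Filter Topology TopologicalSpace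
open scoped ENNReal Pointwise

noncomputable section

/-- The truncated ("bounded") distance `ρ'(x,y) = min {1, ρ(x,y)}` on a metric space. -/
def bdist {α : Type*} [PseudoMetricSpace α] : α → α → ℝ := fun x y => min 1 (dist x y)

/-- The Hausdorff distance `dist_{ρ'}` (corresponding to the truncated metric `ρ'`)
between non-empty closed subsets of a metric space. -/
def clDist {α : Type*} [MetricSpace α] : Closeds α → Closeds α → ℝ :=
  fun A B => (min 1 (EMetric.hausdorffEdist (A : Set α) (B : Set α))).toReal

/-- The Hausdorff distance `dist_ρ` between (non-empty closed bounded) subsets. -/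
def clbDist {α : Type*} [MetricSpace α] : Closeds α → Closeds α → ℝ :=
  fun A B => Metric.hausdorffDist (A : Set α) (B : Set α)

/-- `D^{(d)}_{p,l}(f,g) = ( sup_ξ (1/l) ∫_ξ^{ξ+l} d(f t, g t)^p dt )^{1/p}`,
valued in `ℝ≥0∞`. -/
def weylD {α : Type*} (d : α → α → ℝ) (p l : ℝ) (f g : ℝ → α) : ℝ≥0∞ :=
  (⨆ ξ : ℝ, ENNReal.ofReal (1 / l) *
      ∫⁻ t in Set.Icc ξ (ξ + l), ENNReal.ofReal (d (f t) (g t) ^ p)) ^ (1 / p)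

/-- The Weyl semimetric `D^{(d)}_p(f,g) = lim_{l → +∞} D^{(d)}_{p,l}(f,g)`
(the limit exists; it is formalized here as a `limsup`). -/
def weylDinf {α : Type*} (d : α → α → ℝ) (p : ℝ) (f g : ℝ → α) : ℝ≥0∞ :=
  Filter.limsup (fun l => weylD d p l f g) Filter.atTop

/-- Membership in `M_p(ℝ, α)`: `f` is (strongly) measurable and
`sup_ξ ∫_ξ^{ξ+1} d(f t, x₀)^p dt < +∞`. -/
def MemMp {α : Type*} [TopologicalSpace α] (d : α → α → ℝ) (p : ℝ) (x₀ : α)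
    (f : ℝ → α) : Prop :=
  AEStronglyMeasurable f MeasureTheory.volume ∧
  ∃ C : ℝ, ∀ ξ : ℝ,
    (∫⁻ t in Set.Icc ξ (ξ + 1), ENNReal.ofReal (d (f t) x₀ ^ p)) ≤ ENNReal.ofReal C

/-- A set `T ⊆ ℝ` is relatively dense. -/
def RelDense (T : Set ℝ) : Prop := ∃ a > 0, ∀ ξ : ℝ, (Set.Icc ξ (ξ + a) ∩ T).Nonempty

/-- The set of `(ε, D^{(d)}_{p,l})`-almost periods of `f`. -/
def APeriodsL {α : Type*} (d : α → α → ℝ) (p l ε : ℝ) (f : ℝ → α) : Set ℝ :=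
  {τ | weylD d p l f (fun t => f (t + τ)) < ENNReal.ofReal ε}

/-- The set `P^{(d)}_p(ε; f)` of `(ε, D^{(d)}_p)`-almost periods of `f`. -/
def APeriods {α : Type*} (d : α → α → ℝ) (p ε : ℝ) (f : ℝ → α) : Set ℝ :=
  {τ | weylDinf d p f (fun t => f (t + τ)) < ENNReal.ofReal ε}

/-- Membership in the space `W_p(ℝ, α)` of Weyl almost periodic functions of order `p`
w.r.t. the distance `d` (with distinguished point `x₀`). -/
def MemWp {α : Type*} [TopologicalSpace α] (d : α → α → ℝ) (p : ℝ) (x₀ : α)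
    (f : ℝ → α) : Prop :=
  MemMp d p x₀ f ∧ ∀ ε > 0, ∃ l > 0, RelDense (APeriodsL d p l ε f)

/-- The module `Mod f`: the additive group of all `λ ∈ ℝ` such that `e^{iλτ_j} → 1`
for every `f`-returning sequence `{τ_j}` (a sequence with `D^{(d)}_1(f, f(·+τ_j)) → 0`,
where `d` is the relevant bounded distance). -/
def WMod {α : Type*} (d : α → α → ℝ) (f : ℝ → α) : Set ℝ :=
  {lam : ℝ | ∀ τ : ℕ → ℝ,
    Tendsto (fun j => weylDinf d 1 f (fun t => f (t + τ j))) atTop (nhds 0) →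
    Tendsto (fun j => Complex.exp (Complex.I * ((lam * τ j : ℝ) : ℂ))) atTop (nhds 1)}

/-- `κ_W(T) = lim_{l → +∞} sup_ξ (1/l) meas([ξ, ξ+l] ∩ T)` (formalized as a `limsup`). -/
def kappaW (T : Set ℝ) : ℝ≥0∞ :=
  Filter.limsup (fun l : ℝ => ⨆ ξ : ℝ,
    ENNReal.ofReal (1 / l) * MeasureTheory.volume (Set.Icc ξ (ξ + l) ∩ T)) Filter.atTop

/-- Membership in `M*_p(ℝ, α)`. -/
def MemMpStar {α : Type*} [TopologicalSpace α] (d : α → α → ℝ) (p : ℝ) (x₀ : α)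
    (f : ℝ → α) : Prop :=
  MemMp d p x₀ f ∧
  ∀ ε > 0, ∃ δ > 0, ∀ T : Set ℝ, MeasurableSet T → kappaW T < ENNReal.ofReal δ →
    Filter.limsup (fun l : ℝ => ⨆ ξ : ℝ, ENNReal.ofReal (1 / l) *
        ∫⁻ t in Set.Icc ξ (ξ + l) ∩ T, ENNReal.ofReal (d (f t) x₀ ^ p)) Filter.atTop
      < ENNReal.ofReal ε

/-- Distance from a point to a set w.r.t. the distance `d`, valued in `ℝ≥0∞`
(`∞` for the empty set). -/
def dInfDist {α : Type*} (d : α → α → ℝ) (x : α) (K : Set α) : ℝ≥0∞ :=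
  ⨅ y ∈ K, ENNReal.ofReal (d x y)

/-- Membership in `W̃_p(ℝ, α)`: conditions 1) (relatively dense sets of
`(ε, D^{(d)}_p)`-almost periods) and 2) (approximate compactness of values). -/
def MemWpTilde {α : Type*} [TopologicalSpace α] (d : α → α → ℝ) (p : ℝ) (x₀ : α)
    (f : ℝ → α) : Prop :=
  MemMp d p x₀ f ∧
  (∀ ε > 0, RelDense (APeriods d p ε f)) ∧
  (∀ ε > 0, ∀ δ > 0, ∃ K : Set α, IsCompact K ∧
      kappaW {t | ENNReal.ofReal ε ≤ dInfDist d (f t) K} < ENNReal.ofReal δ)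

/-- The support of a Borel measure on a topological space. -/
def measSupport {α : Type*} [TopologicalSpace α] [MeasurableSpace α]
    (μ : Measure α) : Set α :=
  {x | ∀ V : Set α, IsOpen V → x ∈ V → 0 < μ V}

/-- `r_δ(x, μ) = inf { r > 0 : μ[U_r(x)] > δ }`. -/
def rdelta {α : Type*} [PseudoMetricSpace α] [MeasurableSpace α]
    (x : α) (μ : Measure α) (δ : ℝ) : ℝ :=
  sInf {r : ℝ | 0 < r ∧ ENNReal.ofReal δ < μ (Metric.ball x r)}

/-- The Lévy–Prokhorov distance on Borel probability measures. -/
def lpDist {α : Type*} [MeasurableSpace α] [PseudoEMetricSpace α] :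
    ProbabilityMeasure α → ProbabilityMeasure α → ℝ :=
  fun μ ν => MeasureTheory.levyProkhorovDist (μ : Measure α) (ν : Measure α)

end

/-!
Everything is reduced to almost periodicity in measure: `τ` is a near-period of `X = (g, F)` when
`X` and its translate are close off a set of small upper density on all long windows. A function `f`
is *controlled* by `X` when near-periods of `X` are near-periods of `f`; controlled functions are
closed under Lipschitz operations, uniform limits, and gluing along sublevel sets at suitable
levels. All but countably many levels are suitable: by almost periodicity, each value around which
the function concentrates takes up a fixed share of one window. Iterating a gluing of
countably many constant candidates gives a controlled selection `f` with the required bound on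
`ρ(f, g)`.

Domination of `f` by `F` gives uniform `p`-integrability, which turns almost periodicity in measure
into almost periodicity of order `p`. Finally, every `λ` in the module of `f` gives a character
close to `1` at common near-periods of `g` and `F`, and averaging a product of two cut-off functions
against this character, together with Plancherel, splits `λ` into a frequency of `g` and one
of `F`.
-/

open scoped NNReal

section Plancherel

open FourierTransform SchwartzMap

local notation "L²" => Lp ℂ 2 (volume : Measure ℝ)

theorem integral_fourier_smul_eq {f g : ℝ → ℂ} (hf : Integrable f) (hg : Integrable g) :
    ∫ x, 𝓕 f x • g x = ∫ x, f x • 𝓕 g x := by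
  have := VectorFourier.integral_fourierIntegral_smul_eq_flip (L := innerₗ ℝ)
    Real.continuous_fourierChar continuous_inner hf hg
  rwa [flip_innerₗ] at this

theorem continuous_fourier {f : ℝ → ℂ} (hf : Integrable f) : Continuous (𝓕 f) :=
  VectorFourier.fourierIntegral_continuous Real.continuous_fourierChar
    (L := innerₗ ℝ) continuous_inner hf

theorem fourier_toLp_ae_eq {f : ℝ → ℂ} (hf : Integrable f) (hf₂ : MemLp f 2) :
    (𝓕 (hf₂.toLp f) : L²) =ᵐ[volume] 𝓕 f := by
  refine ae_eq_of_integral_contDiff_smul_eq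
    ((Lp.memLp _).locallyIntegrable one_le_two) (continuous_fourier hf).locallyIntegrable
    fun g hg hgc => ?_
  have hgc' : HasCompactSupport (Complex.ofRealCLM ∘ g) := hgc.comp_left rfl
  set φ : 𝓢(ℝ, ℂ) := hgc'.toSchwartzMap (by fun_prop)
  have hφg (x : ℝ) : φ x = (g x : ℂ) := rfl
  calc ∫ x, g x • (𝓕 (hf₂.toLp f) : L²) x
      = ((𝓕 (hf₂.toLp f) : L²) : 𝓢'(ℝ, ℂ)) φ := by
        rw [Lp.toTemperedDistribution_apply]
        simp [hφg]
    _ = (hf₂.toLp f : 𝓢'(ℝ, ℂ)) (𝓕 φ) := by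
        rw [← Lp.fourier_toTemperedDistribution_eq]; rfl
    _ = ∫ x, f x • 𝓕 (φ : ℝ → ℂ) x := by
        rw [Lp.toTemperedDistribution_apply]
        refine integral_congr_ae ?_
        filter_upwards [hf₂.coeFn_toLp] with x hx
        rw [hx, smul_eq_mul, smul_eq_mul, mul_comm, SchwartzMap.fourier_coe]
    _ = ∫ x, g x • 𝓕 f x := by
        rw [← integral_fourier_smul_eq hf φ.integrable]
        exact integral_congr_ae (.of_forall fun x => by simp [hφg, mul_comm])

theorem memLp_two_fourier {f : ℝ → ℂ} (hf : Integrable f) (hf₂ : MemLp f 2) :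
    MemLp (𝓕 f) 2 :=
  (memLp_congr_ae (fourier_toLp_ae_eq hf hf₂)).1 (Lp.memLp _)

theorem integral_norm_fourier_sq {f : ℝ → ℂ} (hf : Integrable f) (hf₂ : MemLp f 2) :
    ∫ x, ‖𝓕 f x‖ ^ 2 = ∫ x, ‖f x‖ ^ 2 := by
  have key (g : L²) : ∫ x, ‖g x‖ ^ 2 = ‖g‖ ^ 2 := by
    have h := L2.inner_def (𝕜 := ℂ) g g
    simp only [inner_self_eq_norm_sq_to_K, ← RCLike.ofReal_pow, integral_ofReal] at h
    exact (RCLike.ofReal_injective h).symm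
  calc ∫ x, ‖𝓕 f x‖ ^ 2 = ∫ x, ‖(𝓕 (hf₂.toLp f) : L²) x‖ ^ 2 :=
        integral_congr_ae ((fourier_toLp_ae_eq hf hf₂).mono fun x hx => by simp only [hx])
    _ = ∫ x, ‖hf₂.toLp f x‖ ^ 2 := by rw [key, key, Lp.norm_fourier_eq]
    _ = ∫ x, ‖f x‖ ^ 2 := integral_congr_ae (hf₂.coeFn_toLp.mono fun x hx => by simp only [hx])

end Plancherel

section FrequencySplitting

open FourierTransform
open scoped Convolution

theorem norm_fourierChar_sub_one_mul_norm_fourier_le {f : ℝ → ℂ} (hf : Integrable f) (x τ : ℝ) :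
    ‖(𝐞 (x * τ) : ℂ) - 1‖ * ‖𝓕 f x‖ ≤ ∫ s, ‖f (s + τ) - f s‖ := by
  have hchar : ((𝐞 (x * τ) : ℂ) - 1) * 𝓕 f x = 𝓕 (fun s => f (s + τ) - f s) x := by
    have hshift : 𝓕 (fun s => f (s + τ)) x = 𝐞 (x * τ) • 𝓕 f x := by
      have h := congrFun (VectorFourier.fourierIntegral_comp_add_right 𝐞 volume (innerₗ ℝ) f τ) x
      simp only [innerₗ_apply_apply, RCLike.inner_apply, conj_trivial] at h
      exact h
    have hsub : 𝓕 (fun s => f (s + τ) - f s) x = 𝓕 (fun s => f (s + τ)) x - 𝓕 f x := by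
      simp only [Real.fourier_eq, smul_sub]
      exact integral_sub ((Real.fourierIntegral_convergent_iff x).2 (hf.comp_add_right τ))
        ((Real.fourierIntegral_convergent_iff x).2 hf)
    rw [hsub, hshift, Circle.smul_def, smul_eq_mul, sub_mul, one_mul]
  rw [← norm_mul, hchar]
  exact VectorFourier.norm_fourierIntegral_le_integral_norm _ _ _ _ _

theorem fourier_fourierChar_mul_comp_neg (b : ℝ → ℂ) (l x : ℝ) :
    𝓕 (fun s => (𝐞 (l * s) : ℂ) * b (-s)) x = 𝓕 b (l - x) := by
  simp only [Real.fourier_real_eq, Circle.smul_def, smul_eq_mul]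
  rw [← integral_neg_eq_self]
  refine integral_congr_ae (.of_forall fun s => ?_)
  simp only [neg_neg, ← mul_assoc, ← Circle.coe_mul, ← AddChar.map_add_eq_mul]
  ring_nf

theorem half_integral_le_norm_integral_mul {w : ℝ → ℝ} {u : ℝ → ℂ} (hw : Integrable w)
    (hw₀ : ∀ s, 0 ≤ w s) (hu : AEStronglyMeasurable u) (hu₁ : ∀ s, ‖u s‖ = 1)
    (hphase : ∀ s s', w s ≠ 0 → w s' ≠ 0 → ‖u s - u s'‖ ≤ 1 / 2) :
    (∫ s, w s) / 2 ≤ ‖∫ s, u s * w s‖ := by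
  rcases eq_or_ne w 0 with rfl | hne
  · simp
  obtain ⟨s₀, hs₀⟩ := Function.ne_iff.1 hne
  have hw' : Integrable fun s => (w s : ℂ) := hw.ofReal
  have huw : Integrable fun s => u s * w s :=
    hw'.bdd_mul hu (c := 1) (.of_forall fun s => (hu₁ s).le)
  have hdiff : ‖(∫ s, u s * w s) - u s₀ * ((∫ s, w s : ℝ) : ℂ)‖ ≤ (∫ s, w s) / 2 := by
    rw [← integral_complex_ofReal, ← integral_const_mul,
      ← integral_sub huw (hw'.const_mul _), ← integral_div]
    refine norm_integral_le_of_norm_le (hw.div_const 2) (.of_forall fun s => ?_)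
    rw [← sub_mul, norm_mul, Complex.norm_of_nonneg (hw₀ s)]
    rcases eq_or_ne (w s) 0 with h | h
    · simp [h]
    · nlinarith [hphase s s₀ h hs₀, hw₀ s]
  have hmain : ‖u s₀ * ((∫ s, w s : ℝ) : ℂ)‖ = ∫ s, w s := by
    rw [norm_mul, hu₁, one_mul, Complex.norm_of_nonneg (integral_nonneg hw₀)]
  have := norm_sub_norm_le (u s₀ * ((∫ s, w s : ℝ) : ℂ)) (∫ s, u s * w s)
  rw [norm_sub_rev] at hdiff
  linarith

theorem sq_setIntegral_le_measureReal_mul {α : Type*} [MeasurableSpace α] {μ : Measure α}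
    {S : Set α} (hS : μ S ≠ ⊤) {f : α → ℝ} (hf : IntegrableOn f S μ)
    (hf₂ : IntegrableOn (fun x => f x ^ 2) S μ) :
    (∫ x in S, f x ∂μ) ^ 2 ≤ μ.real S * ∫ x in S, f x ^ 2 ∂μ := by
  have : IsFiniteMeasure (μ.restrict S) := ⟨by simpa using hS.lt_top⟩
  have hint (m : ℝ) : IntegrableOn (fun x => f x ^ 2 - 2 * m * f x) S μ :=
    hf₂.sub (hf.const_mul _)
  have hquad (m : ℝ) : 0 ≤ μ.real S * (m * m) + (-2 * ∫ x in S, f x ∂μ) * m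
      + ∫ x in S, f x ^ 2 ∂μ := by
    have hexpand : ∫ x in S, (f x - m) ^ 2 ∂μ = ∫ x in S, (f x ^ 2 - 2 * m * f x + m * m) ∂μ :=
      integral_congr_ae (.of_forall fun x => by ring)
    have hnonneg : 0 ≤ ∫ x in S, (f x - m) ^ 2 ∂μ := integral_nonneg fun x => sq_nonneg _
    rw [hexpand, integral_add (hint m) (integrable_const _),
      integral_sub hf₂ (hf.const_mul _), integral_const_mul, integral_const,
      measureReal_restrict_apply_univ, smul_eq_mul] at hnonneg
    linarith
  have := discrim_le_zero hquad
  rw [discrim] at this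
  linarith

theorem hasCompactSupport_of_forall_abs_le {E : Type*} [Zero E] {f : ℝ → E} {N : ℝ}
    (hf : ∀ s, f s ≠ 0 → |s| ≤ N) : HasCompactSupport f :=
  .of_support_subset_isCompact isCompact_Icc fun s hs => abs_le.1 (hf s hs)

theorem integral_norm_convolution_sq {f g : ℝ → ℂ} (hf : Continuous f) (hg : Continuous g)
    (hfc : HasCompactSupport f) (hgc : HasCompactSupport g) :
    ∫ t, ‖(f ⋆[.mul ℂ ℂ] g) t‖ ^ 2 = ∫ x, ‖𝓕 f x‖ ^ 2 * ‖𝓕 g x‖ ^ 2 := by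
  have hc : Continuous (f ⋆[.mul ℂ ℂ] g) :=
    hfc.continuous_convolution_left _ hf hg.locallyIntegrable
  have hcc : HasCompactSupport (f ⋆[.mul ℂ ℂ] g) := hfc.convolution _ hgc
  rw [← integral_norm_fourier_sq (hc.integrable_of_hasCompactSupport hcc)
    (hc.memLp_of_hasCompactSupport hcc)]
  refine integral_congr_ae (.of_forall fun x => ?_)
  simp only [Real.fourier_mul_convolution_eq (hf.integrable_of_hasCompactSupport hfc)
    (hg.integrable_of_hasCompactSupport hgc), norm_mul, mul_pow]

theorem sq_integral_mul_integral_le_integral_sq_convolution {f g : ℝ → ℝ} {N : ℝ}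
    (hf : Continuous f) (hg : Continuous g) (hfN : ∀ s, f s ≠ 0 → |s| ≤ N)
    (hgN : ∀ s, g s ≠ 0 → |s| ≤ N) (hN : 0 ≤ N) :
    ((∫ s, f s) * ∫ s, g s) ^ 2 ≤ 4 * N * ∫ t, (∫ s, f s * g (t - s)) ^ 2 := by
  have hfc := hasCompactSupport_of_forall_abs_le hfN
  set r : ℝ → ℝ := fun t => ∫ s, f s * g (t - s) with hr
  have hrc : Continuous r := hfc.continuous_convolution_left (.mul ℝ ℝ) hf hg.locallyIntegrable
  have hr_supp : Function.support r ⊆ Set.Icc (-(2 * N)) (2 * N) := by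
    intro t ht
    obtain ⟨s, hs⟩ : ∃ s, f s * g (t - s) ≠ 0 := by
      by_contra! h
      simp [hr, h] at ht
    have hs₁ := abs_le.1 (hfN s (left_ne_zero_of_mul hs))
    have hs₂ := abs_le.1 (hgN (t - s) (right_ne_zero_of_mul hs))
    constructor <;> linarith
  have hr₂_supp : Function.support (fun t => r t ^ 2) ⊆ Set.Icc (-(2 * N)) (2 * N) :=
    fun t ht => hr_supp fun h => ht (by simp [h])
  calc ((∫ s, f s) * ∫ s, g s) ^ 2 = (∫ t, r t) ^ 2 := by
        congr 1
        exact (integral_convolution (.mul ℝ ℝ) (hf.integrable_of_hasCompactSupport hfc)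
          (hg.integrable_of_hasCompactSupport (hasCompactSupport_of_forall_abs_le hgN))).symm
    _ = (∫ t in Set.Icc (-(2 * N)) (2 * N), r t) ^ 2 := by
        rw [setIntegral_eq_integral_of_forall_compl_eq_zero fun t ht => ?_]
        exact Function.notMem_support.1 fun h => ht (hr_supp h)
    _ ≤ volume.real (Set.Icc (-(2 * N)) (2 * N)) *
          ∫ t in Set.Icc (-(2 * N)) (2 * N), r t ^ 2 :=
        sq_setIntegral_le_measureReal_mul isCompact_Icc.measure_lt_top.ne
          hrc.integrableOn_Icc (hrc.pow 2).integrableOn_Icc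
    _ = 4 * N * ∫ t, r t ^ 2 := by
        rw [setIntegral_eq_integral_of_forall_compl_eq_zero fun t ht => ?_,
          Real.volume_real_Icc_of_le (by linarith)]
        · ring
        · exact Function.notMem_support.1 fun h => ht (hr₂_supp h)

theorem half_integral_le_norm_convolution_fourierChar {a b : ℝ → ℝ} {l : ℝ} (ha : Continuous a)
    (hb : Continuous b) (hac : HasCompactSupport a) (ha₀ : ∀ s, 0 ≤ a s) (hb₀ : ∀ s, 0 ≤ b s)
    (hphase : ∀ s s' t, a s ≠ 0 → a s' ≠ 0 → b (s - t) ≠ 0 → b (s' - t) ≠ 0 →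
      ‖(𝐞 (l * (s' - s)) : ℂ) - 1‖ ≤ 1 / 2) (t : ℝ) :
    (∫ s, a s * b (s - t)) / 2 ≤
      ‖((fun s => (a s : ℂ)) ⋆[.mul ℂ ℂ] fun s => (𝐞 (l * s) : ℂ) * (b (-s) : ℂ)) t‖ := by
  have hconv : ((fun s => (a s : ℂ)) ⋆[.mul ℂ ℂ] fun s => (𝐞 (l * s) : ℂ) * (b (-s) : ℂ)) t =
      ∫ s, (𝐞 (l * (t - s)) : ℂ) * ((a s * b (s - t) : ℝ) : ℂ) := by
    refine integral_congr_ae (.of_forall fun s => ?_)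
    simp only [ContinuousLinearMap.mul_apply', neg_sub, Complex.ofReal_mul]
    ring
  have hfac (s s' : ℝ) : (𝐞 (l * (t - s)) : ℂ) - 𝐞 (l * (t - s')) =
      𝐞 (l * (t - s')) * ((𝐞 (l * (s' - s)) : ℂ) - 1) := by
    rw [mul_sub_one, ← Circle.coe_mul, ← AddChar.map_add_eq_mul, ← mul_add,
      sub_add_sub_cancel]
  rw [hconv]
  refine half_integral_le_norm_integral_mul
    ((by fun_prop : Continuous _).integrable_of_hasCompactSupport hac.mul_right)
    (fun s => mul_nonneg (ha₀ s) (hb₀ _)) (by fun_prop) (fun s => Circle.norm_coe _)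
    fun s s' hs hs' => ?_
  rw [hfac, norm_mul, Circle.norm_coe, one_mul]
  exact hphase s s' t (left_ne_zero_of_mul hs) (left_ne_zero_of_mul hs')
    (right_ne_zero_of_mul hs) (right_ne_zero_of_mul hs')

theorem sq_integral_mul_integral_le {a b : ℝ → ℝ} {N l : ℝ} (hN : 0 ≤ N)
    (ha : Continuous a) (hb : Continuous b) (ha₀ : ∀ s, 0 ≤ a s) (hb₀ : ∀ s, 0 ≤ b s)
    (haN : ∀ s, a s ≠ 0 → |s| ≤ N) (hbN : ∀ s, b s ≠ 0 → |s| ≤ N)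
    (hphase : ∀ s s' t, a s ≠ 0 → a s' ≠ 0 → b (s - t) ≠ 0 → b (s' - t) ≠ 0 →
      ‖(𝐞 (l * (s' - s)) : ℂ) - 1‖ ≤ 1 / 2) :
    ((∫ s, a s) * ∫ s, b s) ^ 2 ≤
      16 * N * ∫ x, ‖𝓕 (fun s => (a s : ℂ)) x‖ ^ 2 * ‖𝓕 (fun s => (b s : ℂ)) (l - x)‖ ^ 2 := by
  set f : ℝ → ℂ := fun s => (a s : ℂ)
  set g : ℝ → ℂ := fun s => (𝐞 (l * s) : ℂ) * (b (-s) : ℂ)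
  have hbN' (s : ℝ) (hs : b (-s) ≠ 0) : |s| ≤ N := abs_neg s ▸ hbN _ hs
  have hac := hasCompactSupport_of_forall_abs_le haN
  have hf : Continuous f := by fun_prop
  have hg : Continuous g := by fun_prop
  have hfc : HasCompactSupport f := hac.comp_left (g := ((↑) : ℝ → ℂ)) rfl
  have hgc : HasCompactSupport g := hasCompactSupport_of_forall_abs_le fun s hs =>
    hbN' s (Complex.ofReal_ne_zero.1 (right_ne_zero_of_mul hs))
  have hc : Continuous (f ⋆[.mul ℂ ℂ] g) :=
    hfc.continuous_convolution_left _ hf hg.locallyIntegrable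
  have hpoint (t : ℝ) : (∫ s, a s * b (s - t)) ^ 2 ≤ 4 * ‖(f ⋆[.mul ℂ ℂ] g) t‖ ^ 2 := by
    have h₀ : 0 ≤ ∫ s, a s * b (s - t) := integral_nonneg fun s => mul_nonneg (ha₀ s) (hb₀ _)
    have := half_integral_le_norm_convolution_fourierChar ha hb hac ha₀ hb₀ hphase t
    nlinarith
  calc ((∫ s, a s) * ∫ s, b s) ^ 2
      = ((∫ s, a s) * ∫ s, b (-s)) ^ 2 := by rw [integral_neg_eq_self]
    _ ≤ 4 * N * ∫ t, (∫ s, a s * b (s - t)) ^ 2 := by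
        simpa only [Function.comp_apply, neg_sub] using
          sq_integral_mul_integral_le_integral_sq_convolution ha (hb.comp continuous_neg)
            haN hbN' hN
    _ ≤ 4 * N * ∫ t, 4 * ‖(f ⋆[.mul ℂ ℂ] g) t‖ ^ 2 := by
        refine mul_le_mul_of_nonneg_left (integral_mono_of_nonneg
          (.of_forall fun t => sq_nonneg _) ?_ (.of_forall hpoint)) (by positivity)
        exact ((hc.memLp_of_hasCompactSupport (hfc.convolution _ hgc)
          (p := 2)).integrable_norm_pow two_ne_zero).const_mul 4
    _ = 16 * N * ∫ x, ‖𝓕 f x‖ ^ 2 * ‖𝓕 g x‖ ^ 2 := by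
        rw [integral_const_mul, integral_norm_convolution_sq hf hg hfc hgc]
        ring
    _ = _ := by simp only [g, fourier_fourierChar_mul_comp_neg l (b := fun s => (b s : ℂ))]

theorem exists_le_and_le_of_le_integral_mul {α : Type*} [MeasurableSpace α] {μ : Measure α}
    {P Q : α → ℝ} {K S : ℝ} (hP : Integrable P μ) (hQ : Integrable Q μ) (hP₀ : ∀ x, 0 ≤ P x)
    (hQ₀ : ∀ x, 0 ≤ Q x) (hPS : ∫ x, P x ∂μ ≤ S) (hQS : ∫ x, Q x ∂μ ≤ S) (hS : 0 < S)
    (hK : 0 < K) (hPQ : K ≤ ∫ x, P x * Q x ∂μ) :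
    ∃ x, K / (4 * S) ≤ P x ∧ K / (4 * S) ≤ Q x := by
  by_contra! hsmall
  set κ := K / (4 * S) with hκ
  have hle (x : α) : P x * Q x ≤ κ * (P x + Q x) := by
    rcases le_or_gt κ (P x) with h | h
    · nlinarith [hsmall x h, hP₀ x, hQ₀ x, show 0 < κ by positivity]
    · nlinarith [hP₀ x, hQ₀ x, show 0 < κ by positivity]
  have hbound : ∫ x, P x * Q x ∂μ ≤ κ * (S + S) :=
    calc ∫ x, P x * Q x ∂μ ≤ ∫ x, κ * (P x + Q x) ∂μ :=
          integral_mono_of_nonneg (.of_forall fun x => mul_nonneg (hP₀ x) (hQ₀ x))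
            ((hP.add hQ).const_mul κ) (.of_forall hle)
      _ = κ * (∫ x, P x ∂μ + ∫ x, Q x ∂μ) := by rw [integral_const_mul, integral_add hP hQ]
      _ ≤ κ * (S + S) := by gcongr
  have hκS : κ * (S + S) = K / 2 := by rw [hκ]; field_simp; ring
  linarith

/-- A tent of half-width `N` around the origin, damped so that it only charges points that are
`δ`-almost periods for the seminorm `d`. Its Fourier transform is large only at frequencies that
are controlled by `d`. -/
noncomputable def bump (d : AddGroupSeminorm ℝ) (δ N s : ℝ) : ℝ := max 0 (1 - d s / δ - |s| / N)

section Bump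

variable {d : AddGroupSeminorm ℝ} {δ N : ℝ}

theorem bump_nonneg (s : ℝ) : 0 ≤ bump d δ N s := le_max_left _ _

theorem bump_le_one (hδ : 0 < δ) (hN : 0 < N) (s : ℝ) : bump d δ N s ≤ 1 := by
  have h₁ : 0 ≤ d s / δ := div_nonneg (apply_nonneg d s) hδ.le
  have h₂ : 0 ≤ |s| / N := by positivity
  exact max_le zero_le_one (by linarith)

theorem lt_of_bump_ne_zero (hδ : 0 < δ) (hN : 0 < N) {s : ℝ} (hs : bump d δ N s ≠ 0) :
    d s < δ ∧ |s| < N := by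
  have hpos : 0 < 1 - d s / δ - |s| / N := by
    by_contra! h
    exact hs (max_eq_left h)
  have h₁ : 0 ≤ d s / δ := div_nonneg (apply_nonneg d s) hδ.le
  have h₂ : 0 ≤ |s| / N := by positivity
  exact ⟨(div_lt_one hδ).1 (by linarith), (div_lt_one hN).1 (by linarith)⟩

theorem bump_eq_zero_of_notMem_Icc (hδ : 0 < δ) (hN : 0 < N) {s : ℝ}
    (hs : s ∉ Set.Icc (-N) N) : bump d δ N s = 0 :=
  not_not.1 fun h => hs (abs_le.1 (lt_of_bump_ne_zero hδ hN h).2.le)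

theorem abs_bump_add_sub_bump_le (hδ : 0 < δ) (hN : 0 < N) (s τ : ℝ) :
    |bump d δ N (s + τ) - bump d δ N s| ≤ d τ / δ + |τ| / N := by
  have hd : |d (s + τ) - d s| ≤ d τ := by simpa using abs_sub_map_le_sub d (s + τ) s
  have habs : |(|s + τ| - |s|)| ≤ |τ| := by simpa using abs_abs_sub_abs_le (s + τ) s
  calc |bump d δ N (s + τ) - bump d δ N s|
      ≤ |(1 - d (s + τ) / δ - |s + τ| / N) - (1 - d s / δ - |s| / N)| :=
        (abs_max_sub_max_le_max _ _ _ _).trans (by simp)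
    _ = |(d (s + τ) - d s) / δ + (|s + τ| - |s|) / N| := by rw [← abs_neg]; ring_nf
    _ ≤ |(d (s + τ) - d s) / δ| + |(|s + τ| - |s|) / N| := abs_add_le _ _
    _ ≤ d τ / δ + |τ| / N := by
        rw [abs_div, abs_div, abs_of_pos hδ, abs_of_pos hN]
        gcongr

theorem hasCompactSupport_bump (hδ : 0 < δ) (hN : 0 < N) : HasCompactSupport (bump d δ N) :=
  hasCompactSupport_of_forall_abs_le fun _ hs => (lt_of_bump_ne_zero hδ hN hs).2.le

variable (hd : Continuous d)
include hd

theorem continuous_bump : Continuous (bump d δ N) := by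
  unfold bump
  fun_prop

theorem integrable_bump (hδ : 0 < δ) (hN : 0 < N) : Integrable (bump d δ N) :=
  (continuous_bump hd).integrable_of_hasCompactSupport (hasCompactSupport_bump hδ hN)

theorem integral_bump_sq_le (hδ : 0 < δ) (hN : 0 < N) :
    ∫ s, bump d δ N s ^ 2 ≤ 2 * N := by
  calc ∫ s, bump d δ N s ^ 2 = ∫ s in Set.Icc (-N) N, bump d δ N s ^ 2 := by
        refine (setIntegral_eq_integral_of_forall_compl_eq_zero fun s hs => ?_).symm
        rw [bump_eq_zero_of_notMem_Icc hδ hN hs, zero_pow two_ne_zero]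
    _ ≤ ∫ _s in Set.Icc (-N) N, (1 : ℝ) :=
        setIntegral_mono ((continuous_bump hd).pow 2).integrableOn_Icc
          continuous_const.integrableOn_Icc fun s =>
            pow_le_one₀ (bump_nonneg s) (bump_le_one hδ hN s)
    _ = 2 * N := by
        rw [setIntegral_const, Real.volume_real_Icc_of_le (by linarith), smul_eq_mul]
        ring

theorem integral_abs_bump_add_sub_bump_le (hδ : 0 < δ) (hN : 0 < N) (τ : ℝ) :
    ∫ s, |bump d δ N (s + τ) - bump d δ N s| ≤ 4 * N * (d τ / δ + |τ| / N) := by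
  set S := Set.Icc (-N) N ∪ Set.Icc (-N - τ) (N - τ) with hS
  have hSfin : volume S ≠ ⊤ := (isCompact_Icc.union isCompact_Icc).measure_lt_top.ne
  have hvol : volume.real S ≤ 4 * N := by
    refine (measureReal_union_le _ _).trans ?_
    rw [Real.volume_real_Icc_of_le (by linarith), Real.volume_real_Icc_of_le (by linarith)]
    linarith
  have hzero (s : ℝ) (hs : s ∉ S) : |bump d δ N (s + τ) - bump d δ N s| = 0 := by
    rw [hS, Set.mem_union, not_or] at hs
    rw [bump_eq_zero_of_notMem_Icc hδ hN hs.1, bump_eq_zero_of_notMem_Icc hδ hN, sub_zero, abs_zero]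
    exact fun h => hs.2 ⟨by linarith [h.1], by linarith [h.2]⟩
  calc ∫ s, |bump d δ N (s + τ) - bump d δ N s|
      = ∫ s in S, |bump d δ N (s + τ) - bump d δ N s| :=
        (setIntegral_eq_integral_of_forall_compl_eq_zero hzero).symm
    _ ≤ ∫ _s in S, (d τ / δ + |τ| / N) :=
        setIntegral_mono
          (((integrable_bump hd hδ hN).comp_add_right τ).sub
            (integrable_bump hd hδ hN)).abs.integrableOn
          (integrableOn_const hSfin) (abs_bump_add_sub_bump_le hδ hN · τ)
    _ = volume.real S * (d τ / δ + |τ| / N) := by rw [setIntegral_const, smul_eq_mul]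
    _ ≤ 4 * N * (d τ / δ + |τ| / N) :=
        mul_le_mul_of_nonneg_right hvol
          ((abs_nonneg _).trans (abs_bump_add_sub_bump_le hδ hN 0 τ))

theorem exists_forall_le_intervalIntegral_of_relDense (hδ : 0 < δ)
    (hrd : ∀ ε > 0, RelDense {τ | d τ < ε}) :
    ∃ L > 0, ∃ m > 0, ∀ ξ, m ≤ ∫ s in ξ..ξ + L, max 0 (1 / 2 - d s / δ) := by
  obtain ⟨a, ha, hrel⟩ := hrd (δ / 8) (by positivity)
  obtain ⟨r, hr, hball⟩ := Metric.eventually_nhds_iff.1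
    (hd.continuousAt.eventually_lt_const (map_zero d ▸ (by positivity : 0 < δ / 8)))
  refine ⟨a + r / 2, by positivity, r / 2 * (1 / 4), by positivity, fun ξ => ?_⟩
  obtain ⟨τ, ⟨hτ₁, hτ₂⟩, hτ⟩ := hrel ξ
  have hcont : Continuous fun s => max 0 (1 / 2 - d s / δ) := by fun_prop
  have hquarter (s : ℝ) (hs : s ∈ Set.Icc τ (τ + r / 2)) : 1 / 4 ≤ max 0 (1 / 2 - d s / δ) := by
    have hs' : d (s - τ) < δ / 8 := hball (by
      rw [Real.dist_eq, sub_zero, abs_lt]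
      constructor <;> linarith [hs.1, hs.2])
    have hadd : d s ≤ d (s - τ) + d τ := by simpa using map_add_le_add d (s - τ) τ
    have hdiv : d s / δ ≤ 1 / 4 := by
      rw [div_le_iff₀ hδ]
      linarith [show d τ < δ / 8 from hτ]
    exact le_max_of_le_right (by linarith)
  calc r / 2 * (1 / 4) = ∫ _s in τ..τ + r / 2, (1 / 4 : ℝ) := by
        rw [intervalIntegral.integral_const, smul_eq_mul]
        ring
    _ ≤ ∫ s in τ..τ + r / 2, max 0 (1 / 2 - d s / δ) :=
        intervalIntegral.integral_mono_on (by linarith) intervalIntegrable_const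
          (hcont.intervalIntegrable _ _) hquarter
    _ ≤ ∫ s in ξ..ξ + (a + r / 2), max 0 (1 / 2 - d s / δ) :=
        intervalIntegral.integral_mono_interval hτ₁ (by linarith) (by linarith)
          (.of_forall fun s => le_max_left _ _) (hcont.intervalIntegrable _ _)

theorem exists_forall_nat_mul_le_integral_bump (hδ : 0 < δ)
    (hrd : ∀ ε > 0, RelDense {τ | d τ < ε}) :
    ∃ L > 0, ∃ m > 0, ∀ (n : ℕ) (N : ℝ), 0 < N → 2 * (n * L) ≤ N →
      n * m ≤ ∫ s, bump d δ N s := by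
  obtain ⟨L, hL, m, hm, hwin⟩ := exists_forall_le_intervalIntegral_of_relDense hd hδ hrd
  refine ⟨L, hL, m, hm, fun n N hN hnN => ?_⟩
  have hcont : Continuous fun s => max 0 (1 / 2 - d s / δ) := by fun_prop
  have hnL : 0 ≤ n * L := by positivity
  have hhalf (s : ℝ) (hs : s ∈ Set.Icc 0 (n * L)) :
      max 0 (1 / 2 - d s / δ) ≤ bump d δ N s := by
    have : |s| / N ≤ 1 / 2 := by
      rw [abs_of_nonneg hs.1, div_le_iff₀ hN]
      linarith [hs.2]
    exact max_le_max le_rfl (by linarith)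
  calc n * m = ∑ _k ∈ Finset.range n, m := by simp
    _ ≤ ∑ k ∈ Finset.range n, ∫ s in k * L..(k + 1 : ℕ) * L, max 0 (1 / 2 - d s / δ) := by
        gcongr with k
        rw [Nat.cast_succ, add_one_mul]
        exact hwin _
    _ = ∫ s in 0..n * L, max 0 (1 / 2 - d s / δ) := by
        simpa using intervalIntegral.sum_integral_adjacent_intervals (a := fun k : ℕ => k * L)
          (n := n) fun k _ => hcont.intervalIntegrable (μ := volume) _ _
    _ ≤ ∫ s in 0..n * L, bump d δ N s :=
        intervalIntegral.integral_mono_on hnL (hcont.intervalIntegrable _ _)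
          ((continuous_bump hd).intervalIntegrable _ _) hhalf
    _ ≤ ∫ s, bump d δ N s := by
        rw [intervalIntegral.integral_of_le hnL]
        exact setIntegral_le_integral (integrable_bump hd hδ hN) (.of_forall bump_nonneg)

theorem exists_eventually_mul_le_integral_bump (hδ : 0 < δ)
    (hrd : ∀ ε > 0, RelDense {τ | d τ < ε}) :
    ∃ c > 0, ∀ᶠ N in atTop, c * N ≤ ∫ s, bump d δ N s := by
  obtain ⟨L, hL, m, hm, hsum⟩ := exists_forall_nat_mul_le_integral_bump hd hδ hrd
  refine ⟨m / (4 * L), by positivity, ?_⟩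
  filter_upwards [eventually_ge_atTop (4 * L)] with N hN
  have hN₀ : 0 < N := by linarith
  have hfloor : N / (2 * L) - 1 ≤ ⌊N / (2 * L)⌋₊ := (Nat.sub_one_lt_floor _).le
  have hscale : m / (4 * L) * N ≤ (N / (2 * L) - 1) * m := by
    have : 1 ≤ N / (4 * L) := (one_le_div (by positivity)).2 hN
    calc m / (4 * L) * N = (N / (4 * L) + N / (4 * L) - N / (4 * L)) * m := by ring
      _ ≤ (N / (4 * L) + N / (4 * L) - 1) * m := by gcongr
      _ = (N / (2 * L) - 1) * m := by ring
  calc m / (4 * L) * N ≤ ⌊N / (2 * L)⌋₊ * m := hscale.trans (by gcongr)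
    _ ≤ ∫ s, bump d δ N s := hsum _ N hN₀ (by
        have := Nat.floor_le (show 0 ≤ N / (2 * L) by positivity)
        rw [le_div_iff₀ (by positivity)] at this
        linarith)

end Bump

theorem norm_fourierChar_sub_one_le_of_le_norm_fourier_bump {d : AddGroupSeminorm ℝ}
    (hd : Continuous d) {δ N c x : ℝ} (hδ : 0 < δ) (hN : 0 < N) (hc : 0 < c)
    (hx : c * N ≤ ‖𝓕 (fun s => (bump d δ N s : ℂ)) x‖) (τ : ℝ) :
    ‖(𝐞 (x * τ) : ℂ) - 1‖ ≤ 4 / c * (d τ / δ + |τ| / N) := by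
  have hshift : ‖(𝐞 (x * τ) : ℂ) - 1‖ * (c * N) ≤ 4 * N * (d τ / δ + |τ| / N) :=
    calc ‖(𝐞 (x * τ) : ℂ) - 1‖ * (c * N)
        ≤ ‖(𝐞 (x * τ) : ℂ) - 1‖ * ‖𝓕 (fun s => (bump d δ N s : ℂ)) x‖ := by gcongr
      _ ≤ ∫ s, ‖(bump d δ N (s + τ) : ℂ) - bump d δ N s‖ :=
          norm_fourierChar_sub_one_mul_norm_fourier_le (integrable_bump hd hδ hN).ofReal x τ
      _ = ∫ s, |bump d δ N (s + τ) - bump d δ N s| := by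
          simp only [← Complex.ofReal_sub, Complex.norm_real, Real.norm_eq_abs]
      _ ≤ 4 * N * (d τ / δ + |τ| / N) := integral_abs_bump_add_sub_bump_le hd hδ hN τ
  rw [← le_div_iff₀ (by positivity)] at hshift
  exact hshift.trans_eq (by field_simp)

theorem integral_norm_fourier_bump_sq_le {d : AddGroupSeminorm ℝ} (hd : Continuous d) {δ N : ℝ}
    (hδ : 0 < δ) (hN : 0 < N) :
    Integrable (fun x => ‖𝓕 (fun s => (bump d δ N s : ℂ)) x‖ ^ 2) ∧
      ∫ x, ‖𝓕 (fun s => (bump d δ N s : ℂ)) x‖ ^ 2 ≤ 2 * N := by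
  have hint : Integrable fun s => (bump d δ N s : ℂ) := (integrable_bump hd hδ hN).ofReal
  have hmem : MemLp (fun s => (bump d δ N s : ℂ)) 2 :=
    ((continuous_bump hd).memLp_of_hasCompactSupport (hasCompactSupport_bump hδ hN)).ofReal
  refine ⟨(memLp_two_fourier hint hmem).integrable_norm_pow two_ne_zero, ?_⟩
  rw [integral_norm_fourier_sq hint hmem]
  simpa [Complex.norm_real, sq_abs] using integral_bump_sq_le hd hδ hN

theorem exists_le_norm_fourier_bump {d₁ d₂ : AddGroupSeminorm ℝ} (hd₁ : Continuous d₁)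
    (hd₂ : Continuous d₂) {δ N l c : ℝ} (hδ : 0 < δ) (hN : 0 < N) (hc : 0 < c)
    (hphase : ∀ τ, d₁ τ < 2 * δ → d₂ τ < 2 * δ → ‖(𝐞 (l * τ) : ℂ) - 1‖ ≤ 1 / 2)
    (h₁ : c * N ≤ ∫ s, bump d₁ δ N s) (h₂ : c * N ≤ ∫ s, bump d₂ δ N s) :
    ∃ x, c ^ 2 / 12 * N ≤ ‖𝓕 (fun s => (bump d₁ δ N s : ℂ)) x‖ ∧
      c ^ 2 / 12 * N ≤ ‖𝓕 (fun s => (bump d₂ δ N s : ℂ)) (l - x)‖ := by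
  have hsub {d : AddGroupSeminorm ℝ} {s s' : ℝ} (hs : bump d δ N s ≠ 0)
      (hs' : bump d δ N s' ≠ 0) : d (s' - s) < 2 * δ :=
    (map_sub_le_add d s' s).trans_lt
      (by linarith [(lt_of_bump_ne_zero hδ hN hs).1, (lt_of_bump_ne_zero hδ hN hs').1])
  have hlower : c ^ 4 * N ^ 3 / 16 ≤ ∫ x, ‖𝓕 (fun s => (bump d₁ δ N s : ℂ)) x‖ ^ 2 *
      ‖𝓕 (fun s => (bump d₂ δ N s : ℂ)) (l - x)‖ ^ 2 := by
    have h := sq_integral_mul_integral_le hN.le (continuous_bump hd₁) (continuous_bump hd₂)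
      bump_nonneg bump_nonneg (fun s hs => (lt_of_bump_ne_zero hδ hN hs).2.le)
      (fun s hs => (lt_of_bump_ne_zero hδ hN hs).2.le)
      fun s s' t hs hs' ht ht' => hphase _ (hsub hs hs') (by simpa using hsub ht ht')
    have hmul : c * N * (c * N) ≤ (∫ s, bump d₁ δ N s) * ∫ s, bump d₂ δ N s :=
      mul_le_mul h₁ h₂ (by positivity) (integral_nonneg bump_nonneg)
    have hsq := (pow_le_pow_left₀ (by positivity) hmul 2).trans h
    rw [← div_le_iff₀' (by positivity)] at hsq
    exact le_of_eq_of_le (by field_simp) hsq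
  obtain ⟨hint₁, hle₁⟩ := integral_norm_fourier_bump_sq_le hd₁ hδ hN
  obtain ⟨hint₂, hle₂⟩ := integral_norm_fourier_bump_sq_le hd₂ hδ hN
  obtain ⟨x, hx₁, hx₂⟩ := exists_le_and_le_of_le_integral_mul hint₁ (hint₂.comp_sub_left l)
    (fun x => sq_nonneg _) (fun x => sq_nonneg _) hle₁
    ((integral_sub_left_eq_self _ volume l).trans_le hle₂) (by positivity) (by positivity) hlower
  have hκ : (c ^ 2 / 12 * N) ^ 2 ≤ c ^ 4 * N ^ 3 / 16 / (4 * (2 * N)) := by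
    have : c ^ 4 * N ^ 3 / 16 / (4 * (2 * N)) = c ^ 4 * N ^ 2 / 128 := by field_simp; ring
    rw [this]
    nlinarith [show 0 ≤ c ^ 4 * N ^ 2 by positivity]
  exact ⟨x, le_of_sq_le_sq (hκ.trans hx₁) (norm_nonneg _),
    le_of_sq_le_sq (hκ.trans hx₂) (norm_nonneg _)⟩

theorem exists_forall_abs_le_of_norm_fourierChar_sub_one_le {φ : ℝ → ℝ}
    (hφ : Tendsto φ (𝓝 0) (𝓝 0)) :
    ∃ R, ∀ x : ℝ, (∀ τ, ‖(𝐞 (x * τ) : ℂ) - 1‖ ≤ φ τ) → |x| ≤ R := by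
  obtain ⟨r, hr, hball⟩ := Metric.eventually_nhds_iff.1 (hφ.eventually_lt_const two_pos)
  refine ⟨1 / r, fun x hx => ?_⟩
  by_contra! hlarge
  have hx₀ : 0 < |x| := (by positivity : 0 < 1 / r).trans hlarge
  have hτ : dist (1 / (2 * x)) 0 < r := by
    rw [dist_zero_right, norm_div, norm_mul, norm_one, Real.norm_ofNat, Real.norm_eq_abs,
      div_lt_iff₀ (by positivity)]
    rw [div_lt_iff₀ hr] at hlarge
    linarith
  have hneg : (𝐞 (x * (1 / (2 * x))) : ℂ) = -1 := by
    have : x ≠ 0 := abs_pos.1 hx₀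
    rw [Real.fourierChar_apply, show 2 * Real.pi * (x * (1 / (2 * x))) = Real.pi by field_simp,
      Complex.exp_pi_mul_I]
  have := hx (1 / (2 * x))
  rw [hneg, show ‖(-1 : ℂ) - 1‖ = 2 by norm_num] at this
  linarith [hball hτ]

theorem exists_forall_norm_fourierChar_sub_one_le_of_eventually {φ₁ φ₂ : ℝ → ℝ} {C l : ℝ}
    (hC : 0 ≤ C) (hφ₁ : Tendsto φ₁ (𝓝 0) (𝓝 0))
    (hfreq : ∀ᶠ N in atTop, ∃ x : ℝ, ∀ τ, ‖(𝐞 (x * τ) : ℂ) - 1‖ ≤ C * (φ₁ τ + |τ| / N) ∧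
      ‖(𝐞 ((l - x) * τ) : ℂ) - 1‖ ≤ C * (φ₂ τ + |τ| / N)) :
    ∃ x : ℝ, ∀ τ, ‖(𝐞 (x * τ) : ℂ) - 1‖ ≤ C * φ₁ τ ∧
      ‖(𝐞 ((l - x) * τ) : ℂ) - 1‖ ≤ C * φ₂ τ := by
  obtain ⟨x, hx⟩ := hfreq.choice
  obtain ⟨R, hR⟩ := exists_forall_abs_le_of_norm_fourierChar_sub_one_le
    (φ := fun τ => C * (φ₁ τ + |τ|))
    (by simpa using (hφ₁.add (continuous_abs.tendsto' 0 0 abs_zero)).const_mul C)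
  have hbdd : ∀ᶠ N in atTop, x N ∈ Set.Icc (-R) R := by
    filter_upwards [hx, eventually_ge_atTop 1] with N hN h₁
    refine abs_le.1 (hR _ fun τ => (hN τ).1.trans ?_)
    gcongr
    exact div_le_self (abs_nonneg τ) h₁
  set 𝒰 : Filter ℝ := ↑(Ultrafilter.of (atTop : Filter ℝ))
  have h𝒰 : 𝒰 ≤ atTop := Ultrafilter.of_le atTop
  obtain ⟨y, -, hy⟩ := isCompact_Icc.ultrafilter_le_nhds ((Ultrafilter.of atTop).map x)
    (le_principal_iff.2 (h𝒰 hbdd))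
  have hy : Tendsto x 𝒰 (𝓝 y) := hy
  have hlim (a τ : ℝ) : Tendsto (fun N : ℝ => C * (a + |τ| / N)) 𝒰 (𝓝 (C * a)) := by
    have h := ((tendsto_const_nhds (x := |τ|)).div_atTop tendsto_id).const_add a
    rw [add_zero] at h
    exact (h.const_mul C).mono_left h𝒰
  have hcont (τ : ℝ) : Continuous fun z : ℝ => ‖(𝐞 (z * τ) : ℂ) - 1‖ := by fun_prop
  refine ⟨y, fun τ => ⟨?_, ?_⟩⟩
  · exact le_of_tendsto_of_tendsto (((hcont τ).tendsto y).comp hy) (hlim _ τ)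
      (h𝒰 (hx.mono fun N hN => (hN τ).1))
  · exact le_of_tendsto_of_tendsto (((hcont τ).tendsto (l - y)).comp (hy.const_sub l)) (hlim _ τ)
      (h𝒰 (hx.mono fun N hN => (hN τ).2))

theorem exists_fourierChar_splitting {d₁ d₂ : AddGroupSeminorm ℝ} (hd₁ : Continuous d₁)
    (hd₂ : Continuous d₂) (hrd₁ : ∀ ε > 0, RelDense {τ | d₁ τ < ε})
    (hrd₂ : ∀ ε > 0, RelDense {τ | d₂ τ < ε}) {l δ : ℝ} (hδ : 0 < δ)
    (hphase : ∀ τ, d₁ τ < δ → d₂ τ < δ → ‖(𝐞 (l * τ) : ℂ) - 1‖ ≤ 1 / 2) :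
    ∃ x C : ℝ, ∀ τ, ‖(𝐞 (x * τ) : ℂ) - 1‖ ≤ C * d₁ τ ∧
      ‖(𝐞 ((l - x) * τ) : ℂ) - 1‖ ≤ C * d₂ τ := by
  have hδ₂ : 0 < δ / 2 := half_pos hδ
  obtain ⟨c₁, hc₁, hev₁⟩ := exists_eventually_mul_le_integral_bump hd₁ hδ₂ hrd₁
  obtain ⟨c₂, hc₂, hev₂⟩ := exists_eventually_mul_le_integral_bump hd₂ hδ₂ hrd₂
  set c := min c₁ c₂
  have hc : 0 < c := lt_min hc₁ hc₂
  have hc' : 0 < c ^ 2 / 12 := by positivity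
  obtain ⟨x, hx⟩ := exists_forall_norm_fourierChar_sub_one_le_of_eventually
    (φ₁ := fun τ => d₁ τ / (δ / 2)) (φ₂ := fun τ => d₂ τ / (δ / 2)) (C := 4 / (c ^ 2 / 12)) (l := l)
    (by positivity) ((by fun_prop : Continuous _).tendsto' 0 0 (by simp)) <| by
    filter_upwards [hev₁, hev₂, eventually_gt_atTop 0] with N h₁ h₂ hN
    obtain ⟨x, hx₁, hx₂⟩ := exists_le_norm_fourier_bump hd₁ hd₂ hδ₂ hN hc
      (by simpa [mul_div_cancel₀] using hphase)
      ((mul_le_mul_of_nonneg_right (min_le_left _ _) hN.le).trans h₁)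
      ((mul_le_mul_of_nonneg_right (min_le_right _ _) hN.le).trans h₂)
    exact ⟨x, fun τ =>
      ⟨norm_fourierChar_sub_one_le_of_le_norm_fourier_bump hd₁ hδ₂ hN hc' hx₁ τ,
        norm_fourierChar_sub_one_le_of_le_norm_fourier_bump hd₂ hδ₂ hN hc' hx₂ τ⟩⟩
  refine ⟨x, 4 / (c ^ 2 / 12) / (δ / 2), fun τ => ?_⟩
  simpa only [mul_div_assoc', div_mul_eq_mul_div] using hx τ

end FrequencySplitting

section AlmostPeriodicityInMeasure

theorem volume_preimage_add_inter_Icc (T : Set ℝ) (τ ξ L : ℝ) :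
    volume ((· + τ) ⁻¹' T ∩ Set.Icc ξ (ξ + L)) = volume (T ∩ Set.Icc (ξ + τ) (ξ + τ + L)) := by
  rw [← measure_preimage_add_right volume τ (T ∩ Set.Icc (ξ + τ) (ξ + τ + L)), Set.preimage_inter,
    Set.preimage_add_const_Icc, add_sub_cancel_right, add_right_comm, add_sub_cancel_right]

theorem measure_Icc_le_of_forall_measure_Icc_le {μ : Measure ℝ} {l c : ℝ} (hl : 0 < l) (hc : 0 ≤ c)
    (h : ∀ ξ, μ (Set.Icc ξ (ξ + l)) ≤ ENNReal.ofReal (c * l)) {L : ℝ} (hL : l ≤ L) (ξ : ℝ) :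
    μ (Set.Icc ξ (ξ + L)) ≤ ENNReal.ofReal (2 * c * L) := by
  have hmul {n : ℕ} (hn : 1 ≤ n) (ξ : ℝ) :
      μ (Set.Icc ξ (ξ + n * l)) ≤ ENNReal.ofReal (n * (c * l)) := by
    induction n, hn using Nat.le_induction generalizing ξ with
    | base => simpa using h ξ
    | succ n _ ih =>
      have hunion : Set.Icc ξ (ξ + (n + 1 : ℕ) * l) ⊆
          Set.Icc (ξ + l) (ξ + l + n * l) ∪ Set.Icc ξ (ξ + l) := by
        rintro t ⟨ht₁, ht₂⟩
        push_cast at ht₂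
        rcases le_total t (ξ + l) with ht | ht
        · exact Or.inr ⟨ht₁, ht⟩
        · exact Or.inl ⟨ht, by linarith⟩
      calc μ (Set.Icc ξ (ξ + (n + 1 : ℕ) * l))
          ≤ ENNReal.ofReal (n * (c * l)) + ENNReal.ofReal (c * l) :=
            (measure_mono hunion).trans ((measure_union_le _ _).trans (add_le_add (ih _) (h ξ)))
        _ = ENNReal.ofReal ((n + 1 : ℕ) * (c * l)) := by
            rw [← ENNReal.ofReal_add (by positivity) (by positivity)]
            push_cast
            ring_nf
  have hL₀ : 0 < L := hl.trans_le hL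
  have hceil : L ≤ ⌈L / l⌉₊ * l := (div_le_iff₀ hl).1 (Nat.le_ceil _)
  have hceil' : ⌈L / l⌉₊ * l ≤ 2 * L :=
    calc ⌈L / l⌉₊ * l ≤ (L / l + 1) * l := by
          gcongr
          exact (Nat.ceil_lt_add_one (by positivity)).le
      _ = L + l := by field_simp
      _ ≤ 2 * L := by linarith
  calc μ (Set.Icc ξ (ξ + L)) ≤ μ (Set.Icc ξ (ξ + ⌈L / l⌉₊ * l)) :=
        measure_mono (Set.Icc_subset_Icc_right (by linarith))
    _ ≤ ENNReal.ofReal (⌈L / l⌉₊ * (c * l)) := hmul (Nat.one_le_ceil_iff.2 (by positivity)) ξ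
    _ ≤ ENNReal.ofReal (2 * c * L) := ENNReal.ofReal_le_ofReal (by nlinarith)

/-- `DensityLE l T c`: every interval of length at least `l` meets `T` in a set of relative measure
at most `c`, i.e. `T` has uniform upper density at most `c`, already visible at scale `l`. -/
def DensityLE (l : ℝ) (T : Set ℝ) (c : ℝ) : Prop :=
  0 < l ∧ ∀ L ≥ l, ∀ ξ, volume (T ∩ Set.Icc ξ (ξ + L)) ≤ ENNReal.ofReal (c * L)

namespace DensityLE

variable {l l' c c' : ℝ} {T T' : Set ℝ}

theorem mono (h : DensityLE l T c) (hl : l ≤ l') (hT : T' ⊆ T) (hc : c ≤ c') :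
    DensityLE l' T' c' := by
  refine ⟨h.1.trans_le hl, fun L hL ξ => ?_⟩
  have hL₀ : 0 ≤ L := h.1.le.trans (hl.trans hL)
  calc volume (T' ∩ Set.Icc ξ (ξ + L)) ≤ volume (T ∩ Set.Icc ξ (ξ + L)) := by gcongr
    _ ≤ ENNReal.ofReal (c * L) := h.2 L (hl.trans hL) ξ
    _ ≤ ENNReal.ofReal (c' * L) := by gcongr

theorem union (h : DensityLE l T c) (h' : DensityLE l' T' c') (hc : 0 ≤ c) (hc' : 0 ≤ c') :
    DensityLE (max l l') (T ∪ T') (c + c') := by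
  refine ⟨lt_max_of_lt_left h.1, fun L hL ξ => ?_⟩
  have hL₀ : 0 ≤ L := h.1.le.trans ((le_max_left _ _).trans hL)
  rw [Set.union_inter_distrib_right, add_mul, ENNReal.ofReal_add (by positivity) (by positivity)]
  exact (measure_union_le _ _).trans (add_le_add (h.2 L ((le_max_left _ _).trans hL) ξ)
    (h'.2 L ((le_max_right _ _).trans hL) ξ))

theorem preimage_add (h : DensityLE l T c) (τ : ℝ) : DensityLE l ((· + τ) ⁻¹' T) c :=
  ⟨h.1, fun L hL _ => (volume_preimage_add_inter_Icc ..).trans_le (h.2 L hL _)⟩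

theorem of_forall_window (hl : 0 < l) (hc : 0 ≤ c)
    (h : ∀ ξ, volume (T ∩ Set.Icc ξ (ξ + l)) ≤ ENNReal.ofReal (c * l)) :
    DensityLE l T (2 * c) := by
  have hrestrict (a b : ℝ) : volume.restrict T (Set.Icc a b) = volume (T ∩ Set.Icc a b) := by
    rw [Measure.restrict_apply measurableSet_Icc, Set.inter_comm]
  refine ⟨hl, fun L hL ξ => ?_⟩
  rw [← hrestrict]
  exact measure_Icc_le_of_forall_measure_Icc_le hl hc (by simpa only [hrestrict] using h) hL ξ

end DensityLE

theorem edist_lt_ofReal_add {α : Type*} [PseudoEMetricSpace α] {x y z : α} {a b : ℝ}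
    (hxy : edist x y < ENNReal.ofReal a) (hyz : edist y z < ENNReal.ofReal b) :
    edist x z < ENNReal.ofReal (a + b) := by
  have ha : 0 < a := ENNReal.ofReal_pos.1 (zero_le.trans_lt hxy)
  have hb : 0 < b := ENNReal.ofReal_pos.1 (zero_le.trans_lt hyz)
  rw [ENNReal.ofReal_add ha.le hb.le]
  exact (edist_triangle x y z).trans_lt (ENNReal.add_lt_add hxy hyz)

variable {α β : Type*} [PseudoEMetricSpace α] [PseudoEMetricSpace β]

/-- The set of times at which the translate of `y` by `τ` is at distance at least `ε` from `y`. -/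
def deviationSet (y : ℝ → α) (ε τ : ℝ) : Set ℝ :=
  {t | ENNReal.ofReal ε ≤ edist (y t) (y (t + τ))}

section DeviationSet

variable {y : ℝ → α} {z : ℝ → β} {ε ε' σ τ t : ℝ}

theorem notMem_deviationSet :
    t ∉ deviationSet y ε τ ↔ edist (y t) (y (t + τ)) < ENNReal.ofReal ε := by
  simp [deviationSet]

theorem deviationSet_anti (h : ε ≤ ε') : deviationSet y ε' τ ⊆ deviationSet y ε τ :=
  fun _ ht => (ENNReal.ofReal_le_ofReal h).trans ht

theorem deviationSet_add_subset :
    deviationSet y (ε + ε') (σ + τ) ⊆ deviationSet y ε σ ∪ (· + σ) ⁻¹' deviationSet y ε' τ := by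
  intro t
  contrapose
  simp only [Set.mem_union, not_or, Set.mem_preimage, notMem_deviationSet, ← add_assoc]
  exact fun h => edist_lt_ofReal_add h.1 h.2

theorem deviationSet_neg : deviationSet y ε (-τ) = (· + -τ) ⁻¹' deviationSet y ε τ := by
  ext t
  simp [deviationSet, edist_comm]

theorem deviationSet_prodMk : deviationSet (fun t => (y t, z t)) ε τ =
    deviationSet y ε τ ∪ deviationSet z ε τ := by
  ext t
  simp [deviationSet, Prod.edist_eq]

theorem measurableSet_deviationSet (hy : StronglyMeasurable y) :
    MeasurableSet (deviationSet y ε τ) :=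
  measurableSet_le measurable_const
    (hy.edist (hy.comp_measurable (measurable_add_const τ))).measurable

end DeviationSet

/-- An almost period in measure at scale `l`: translating by `τ` moves `y` by at least `ε` only on a
set of upper density at most `ε`. -/
def IsNearPeriod (y : ℝ → α) (l ε τ : ℝ) : Prop := DensityLE l (deviationSet y ε τ) ε

/-- Weyl almost periodicity in measure: for each `ε`, the `ε`-near-periods at some common scale are
relatively dense. -/
def WeylAPInMeasure (y : ℝ → α) : Prop := ∀ ε > 0, ∃ l, RelDense {τ | IsNearPeriod y l ε τ}

namespace IsNearPeriod

variable {y : ℝ → α} {l l' ε ε' σ τ : ℝ}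

theorem mono (h : IsNearPeriod y l ε τ) (hl : l ≤ l') (hε : ε ≤ ε') : IsNearPeriod y l' ε' τ :=
  DensityLE.mono h hl (deviationSet_anti hε) hε

theorem neg (h : IsNearPeriod y l ε τ) : IsNearPeriod y l ε (-τ) := by
  rw [IsNearPeriod, deviationSet_neg]
  exact DensityLE.preimage_add h _

theorem add (h : IsNearPeriod y l ε σ) (h' : IsNearPeriod y l' ε' τ) (hε : 0 ≤ ε) (hε' : 0 ≤ ε') :
    IsNearPeriod y (max l l') (ε + ε') (σ + τ) :=
  (DensityLE.union h (DensityLE.preimage_add h' σ) hε hε').mono le_rfl deviationSet_add_subset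
    le_rfl

theorem sub (h : IsNearPeriod y l ε σ) (h' : IsNearPeriod y l' ε' τ) (hε : 0 ≤ ε) (hε' : 0 ≤ ε') :
    IsNearPeriod y (max l l') (ε + ε') (σ - τ) :=
  sub_eq_add_neg σ τ ▸ h.add h'.neg hε hε'

end IsNearPeriod

theorem RelDense.mono {S T : Set ℝ} (hS : RelDense S) (hST : S ⊆ T) : RelDense T := by
  obtain ⟨a, ha, h⟩ := hS
  exact ⟨a, ha, fun ξ => (h ξ).mono (Set.inter_subset_inter_right _ hST)⟩

/-- A near-period carries a set `B`, up to small density, into a set `B'` whose measure is only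
tested on one window. -/
theorem WeylAPInMeasure.exists_densityLE_of_window {y : ℝ → α} (hy : WeylAPInMeasure y)
    {δ ε : ℝ} (hδ : 0 < δ) (hδε : δ ≤ ε) :
    ∃ L > 0, ∀ (s : ℝ) (B B' : Set ℝ),
      (∀ t ∈ B, ∀ τ, t ∉ deviationSet y δ τ → t + s ∉ deviationSet y δ τ → t + τ ∈ B') →
      volume (B' ∩ Set.Icc 0 (2 * L)) ≤ ENNReal.ofReal (ε * L) → DensityLE L B (6 * ε) := by
  have hε : 0 < ε := hδ.trans_le hδε
  obtain ⟨l, a, ha, hdense⟩ := hy δ hδ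
  have hL : 0 < max l a := lt_max_of_lt_right ha
  refine ⟨max l a, hL, fun s B B' hB hB' => ?_⟩
  rw [show 6 * ε = 2 * (3 * ε) by ring]
  refine DensityLE.of_forall_window hL (by positivity) fun ξ => ?_
  obtain ⟨τ, ⟨hτ₁, hτ₂⟩, hτ⟩ := hdense (-ξ)
  have hτ : DensityLE l (deviationSet y δ τ) ε := DensityLE.mono hτ le_rfl subset_rfl hδε
  have hsub : B ∩ Set.Icc ξ (ξ + max l a) ⊆
      (deviationSet y δ τ ∩ Set.Icc ξ (ξ + max l a) ∪
        (· + s) ⁻¹' deviationSet y δ τ ∩ Set.Icc ξ (ξ + max l a)) ∪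
      (· + τ) ⁻¹' (B' ∩ Set.Icc 0 (2 * max l a)) := by
    rintro t ⟨htB, ht⟩
    by_cases h₁ : t ∈ deviationSet y δ τ
    · exact Or.inl (Or.inl ⟨h₁, ht⟩)
    by_cases h₂ : t + s ∈ deviationSet y δ τ
    · exact Or.inl (Or.inr ⟨h₂, ht⟩)
    · refine Or.inr ⟨hB t htB τ h₁ h₂, ?_, ?_⟩
      · linarith [ht.1]
      · linarith [ht.2, le_max_right l a]
  calc volume (B ∩ Set.Icc ξ (ξ + max l a))
      ≤ ENNReal.ofReal (ε * max l a) + ENNReal.ofReal (ε * max l a) +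
          ENNReal.ofReal (ε * max l a) := by
        refine (measure_mono hsub).trans ((measure_union_le _ _).trans
          (add_le_add ((measure_union_le _ _).trans (add_le_add ?_ ?_)) ?_))
        · exact hτ.2 _ (le_max_left _ _) ξ
        · exact (hτ.preimage_add s).2 _ (le_max_left _ _) ξ
        · rwa [measure_preimage_add_right]
    _ = ENNReal.ofReal (3 * ε * max l a) := by
        rw [← ENNReal.ofReal_add (by positivity) (by positivity),
          ← ENNReal.ofReal_add (by positivity) (by positivity)]
        ring_nf

theorem WeylAPInMeasure.exists_densityLE_of_antitone {y : ℝ → α} (hy : WeylAPInMeasure y)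
    {B B' : ℕ → Set ℝ} (hmeas : ∀ n, MeasurableSet (B' n)) (hanti : Antitone B')
    (hinter : ⋂ n, B' n = ∅) {δ : ℝ} (hδ : 0 < δ)
    (hB : ∀ n, ∀ t ∈ B n, ∀ τ, t ∉ deviationSet y δ τ → t + τ ∈ B' n) {ε : ℝ} (hε : 0 < ε) :
    ∃ n l, DensityLE l (B n) ε := by
  obtain ⟨L, hL, hwindow⟩ := hy.exists_densityLE_of_window (lt_min hδ (by positivity))
    (min_le_right δ (ε / 6))
  have htendsto : Tendsto (fun n => volume (B' n ∩ Set.Icc 0 (2 * L))) atTop (𝓝 0) := by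
    have := tendsto_measure_iInter_atTop (μ := volume) (s := fun n => B' n ∩ Set.Icc 0 (2 * L))
      (fun n => ((hmeas n).inter measurableSet_Icc).nullMeasurableSet)
      (fun i j h => Set.inter_subset_inter_left _ (hanti h))
      ⟨0, measure_ne_top_of_subset Set.inter_subset_right measure_Icc_lt_top.ne⟩
    rwa [← Set.iInter_inter, hinter, Set.empty_inter, measure_empty] at this
  obtain ⟨n, hn⟩ := (htendsto.eventually_le_const
    (u := ENNReal.ofReal (ε / 6 * L)) (by positivity)).exists
  refine ⟨n, L, (hwindow 0 (B n) (B' n) (fun t ht τ hτ _ => hB n t ht τ ?_) hn).mono le_rfl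
    subset_rfl (by linarith)⟩
  exact fun h => hτ (deviationSet_anti (min_le_left _ _) h)

section Translation

theorem tendsto_volume_symmDiff_preimage_add {A : Set ℝ} (hA : MeasurableSet A)
    (hfin : volume A ≠ ∞) :
    Tendsto (fun h : ℝ => volume (symmDiff ((· + h) ⁻¹' A) A)) (𝓝 0) (𝓝 0) := by
  have hcont : Continuous fun h : ℝ => (ContinuousMap.mk (· + h) : C(ℝ, ℝ)) :=
    ContinuousMap.continuous_of_continuous_uncurry _ (continuous_snd.add continuous_fst)
  have := tendsto_measure_symmDiff_preimage_nhds_zero (μ := (volume : Measure ℝ))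
    (ν := (volume : Measure ℝ)) (s := A) (hcont.tendsto 0)
    (Eventually.of_forall fun h => measurePreserving_add_right volume h)
    (measurePreserving_add_right volume 0) hA.nullMeasurableSet hfin
  simpa using this

theorem tendsto_volume_simpleFunc_add_ne {γ : Type*} (s : SimpleFunc ℝ γ) (R : ℝ) :
    Tendsto (fun h => volume ({t | s (t + h) ≠ s t} ∩ Set.Icc 0 R)) (𝓝 0) (𝓝 0) := by
  set A : γ → Set ℝ := fun v => s ⁻¹' {v} ∩ Set.Icc (-1) (R + 1)
  have hA : Tendsto (fun h : ℝ => ∑ v ∈ s.range, volume (symmDiff ((· + h) ⁻¹' A v) (A v)))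
      (𝓝 0) (𝓝 0) := by
    have hterm (v : γ) := tendsto_volume_symmDiff_preimage_add
      (A := A v) ((s.measurableSet_fiber v).inter measurableSet_Icc)
      (measure_ne_top_of_subset Set.inter_subset_right measure_Icc_lt_top.ne)
    simpa only [Finset.sum_const_zero] using tendsto_finsetSum s.range fun v _ => hterm v
  refine tendsto_of_tendsto_of_tendsto_of_le_of_le' tendsto_const_nhds hA
    (Eventually.of_forall fun _ => zero_le) ?_
  filter_upwards [Metric.ball_mem_nhds (0 : ℝ) one_pos] with h hh
  rw [mem_ball_zero_iff, Real.norm_eq_abs, abs_lt] at hh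
  refine le_trans (measure_mono ?_) (measure_biUnion_finset_le _ _)
  rintro t ⟨hne, ht₀, htR⟩
  refine Set.mem_biUnion (s.mem_range_self t) (Or.inr ⟨⟨rfl, ?_, ?_⟩, fun ht => hne ht.1⟩) <;>
    linarith

theorem exists_simpleFunc_edist_lt {y : ℝ → α} (hy : StronglyMeasurable y) (R : ℝ) {ε η : ℝ}
    (hε : 0 < ε) (hη : 0 < η) :
    ∃ (s : SimpleFunc ℝ α) (T : Set ℝ), volume (T ∩ Set.Icc (-R) R) ≤ ENNReal.ofReal η ∧
      ∀ t ∉ T, edist (y t) (s t) < ENNReal.ofReal ε := by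
  have : IsFiniteMeasure (volume.restrict (Set.Icc (-R) R)) := ⟨by simp⟩
  obtain ⟨T, hTm, hTη, hunif⟩ := tendstoUniformlyOn_of_ae_tendsto'
    (μ := volume.restrict (Set.Icc (-R) R)) (fun n => (hy.approx n).stronglyMeasurable) hy
    (Eventually.of_forall hy.tendsto_approx) hη
  obtain ⟨n, hn⟩ :=
    (EMetric.tendstoUniformlyOn_iff.1 hunif (ENNReal.ofReal ε) (by positivity)).exists
  exact ⟨hy.approx n, T, by rwa [Measure.restrict_apply hTm] at hTη, hn⟩

theorem exists_volume_deviationSet_le {y : ℝ → α} (hy : StronglyMeasurable y) (R : ℝ) {ε η : ℝ}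
    (hε : 0 < ε) (hη : 0 < η) :
    ∃ ω > 0, ∀ h, |h| < ω → volume (deviationSet y ε h ∩ Set.Icc 0 R) ≤ ENNReal.ofReal η := by
  obtain ⟨s, T, hT, hs⟩ := exists_simpleFunc_edist_lt hy (R + 1) (half_pos hε)
    (by positivity : 0 < η / 3)
  obtain ⟨r, hr, hball⟩ := Metric.eventually_nhds_iff.1 ((tendsto_volume_simpleFunc_add_ne s R)
    |>.eventually_le_const (u := ENNReal.ofReal (η / 3)) (by positivity))
  refine ⟨min r 1, lt_min hr one_pos, fun h hh => ?_⟩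
  have hh₁ := abs_lt.1 (hh.trans_le (min_le_right _ _))
  set W := Set.Icc (-(R + 1)) (R + 1)
  have hsub : deviationSet y ε h ∩ Set.Icc 0 R ⊆
      T ∩ W ∪ (· + h) ⁻¹' (T ∩ W) ∪ {t | s (t + h) ≠ s t} ∩ Set.Icc 0 R := by
    rintro t ⟨ht, ht₀, htR⟩
    by_contra! hc
    simp only [Set.mem_union, Set.mem_inter_iff, Set.mem_preimage, not_or] at hc
    obtain ⟨⟨h₁, h₂⟩, h₃⟩ := hc
    have hst : s (t + h) = s t := by simpa [ht₀, htR] using h₃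
    have hy₁ := hs t fun hT => h₁ ⟨hT, by linarith, by linarith⟩
    have hy₂ := hs (t + h) fun hT => h₂ ⟨hT, by linarith, by linarith⟩
    rw [hst, edist_comm] at hy₂
    exact notMem_deviationSet.2 (add_halves ε ▸ edist_lt_ofReal_add hy₁ hy₂) ht
  calc volume (deviationSet y ε h ∩ Set.Icc 0 R)
      ≤ ENNReal.ofReal (η / 3) + ENNReal.ofReal (η / 3) + ENNReal.ofReal (η / 3) := by
        refine (measure_mono hsub).trans ((measure_union_le _ _).trans
          (add_le_add ((measure_union_le _ _).trans (add_le_add hT ?_)) (hball ?_)))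
        · rwa [measure_preimage_add_right]
        · simpa using hh.trans_le (min_le_left _ _)
    _ = ENNReal.ofReal η := by
        rw [← ENNReal.ofReal_add (by positivity) (by positivity),
          ← ENNReal.ofReal_add (by positivity) (by positivity), add_thirds]

theorem WeylAPInMeasure.exists_isNearPeriod_of_abs_lt {y : ℝ → α} (hw : WeylAPInMeasure y)
    (hy : StronglyMeasurable y) {ε : ℝ} (hε : 0 < ε) :
    ∃ ω > 0, ∃ l, ∀ h, |h| < ω → IsNearPeriod y l ε h := by
  obtain ⟨L, hL, hwindow⟩ := hw.exists_densityLE_of_window (by positivity) (le_refl (ε / 6))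
  obtain ⟨ω, hω, hlocal⟩ := exists_volume_deviationSet_le hy (2 * L) (ε := ε / 6)
    (η := ε / 6 * L) (by positivity) (by positivity)
  refine ⟨ω, hω, L, fun h hh => (hwindow h (deviationSet y ε h) (deviationSet y (ε / 6) h)
    (fun t ht τ h₁ h₂ => ?_) (hlocal h hh)).mono le_rfl subset_rfl (by linarith)⟩
  contrapose! ht
  rw [notMem_deviationSet] at *
  rw [edist_comm, add_right_comm] at h₂
  exact (edist_lt_ofReal_add (edist_lt_ofReal_add h₁ ht) h₂).trans_le
    (ENNReal.ofReal_le_ofReal (by linarith))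

end Translation

section Product

/-- The pigeonhole principle behind common almost periods: differences of elements of two relatively
dense sets fall into finitely many classes, and within a class they almost agree. -/
theorem RelDense.exists_almost_common_differences {S T : Set ℝ} (hS : RelDense S) (hT : RelDense T)
    {ω : ℝ} (hω : 0 < ω) :
    RelDense {τ | ∃ σ ∈ S, ∃ σ' ∈ S, ∃ ρ ∈ T, ∃ ρ' ∈ T, τ = σ - σ' ∧ |τ - (ρ - ρ')| < ω} := by
  obtain ⟨a, ha, hS⟩ := hS
  obtain ⟨b, -, hT⟩ := hT
  choose σ hσ hσS using hS
  choose ρ hρ hρT using hT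
  have hbdd : Set.range (fun ξ => σ ξ - ρ ξ) ⊆ Set.Icc (-b) a := by
    rintro _ ⟨ξ, rfl⟩
    constructor <;> linarith [(hσ ξ).1, (hσ ξ).2, (hρ ξ).1, (hρ ξ).2]
  have hcover := Metric.finite_approx_of_totallyBounded ((totallyBounded_Icc _ _).subset hbdd) ω hω
  simp_rw [← Set.image_univ] at hcover
  obtain ⟨C, -, hC, hcover⟩ := Set.exists_subset_image_finite_and.1 hcover
  obtain ⟨M, hM, hCM⟩ := hC.isBounded.exists_pos_norm_le
  refine ⟨2 * (M + a), by positivity, fun ξ => ?_⟩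
  obtain ⟨c, hcC, hc⟩ := Set.mem_iUnion₂.1 (Set.biUnion_image ▸
    hcover (Set.mem_image_of_mem _ (Set.mem_univ (ξ + M + a))))
  have hcM := abs_le.1 (hCM c hcC)
  refine ⟨σ (ξ + M + a) - σ c, ⟨?_, ?_⟩, _, hσS _, _, hσS _, _, hρT (ξ + M + a), _, hρT c, rfl, ?_⟩
  · linarith [(hσ (ξ + M + a)).1, (hσ c).2]
  · linarith [(hσ (ξ + M + a)).2, (hσ c).1]
  · rw [sub_sub_sub_comm]
    exact hc

theorem WeylAPInMeasure.prodMk {y : ℝ → α} {z : ℝ → β} (hy : WeylAPInMeasure y)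
    (hz : WeylAPInMeasure z) (hzm : StronglyMeasurable z) :
    WeylAPInMeasure fun t => (y t, z t) := by
  intro ε hε
  have hε₆ : 0 < ε / 6 := by positivity
  obtain ⟨ω, hω, l, htrans⟩ := hz.exists_isNearPeriod_of_abs_lt hzm hε₆
  obtain ⟨ly, hly⟩ := hy _ hε₆
  obtain ⟨lz, hlz⟩ := hz _ hε₆
  refine ⟨max (max ly ly) (max (max lz lz) l),
    (hly.exists_almost_common_differences hlz hω).mono ?_⟩
  rintro τ ⟨σ, hσ, σ', hσ', ρ, hρ, ρ', hρ', hτ, hclose⟩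
  have hτy : IsNearPeriod y (max ly ly) (ε / 6 + ε / 6) τ := hτ ▸ hσ.sub hσ' hε₆.le hε₆.le
  have hτz : IsNearPeriod z (max (max lz lz) l) (ε / 6 + ε / 6 + ε / 6) τ := by
    simpa using (hρ.sub hρ' hε₆.le hε₆.le).add (htrans _ hclose) (by positivity) hε₆.le
  refine (DensityLE.union hτy hτz (by positivity) (by positivity)).mono le_rfl ?_ (by linarith)
  rw [deviationSet_prodMk]
  exact Set.union_subset_union (deviationSet_anti (by linarith)) (deviationSet_anti (by linarith))

end Product
end AlmostPeriodicityInMeasure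

section Control

variable {α β γ : Type*} [PseudoEMetricSpace α] [PseudoEMetricSpace β] [PseudoEMetricSpace γ]

/-- The sets `B τ` have small density whenever `τ` is a sufficiently good near-period of `X`, at a
scale depending only on the scale of the near-period. -/
def ControlsFamily (X : ℝ → α) (B : ℝ → Set ℝ) : Prop :=
  ∀ ε > 0, ∃ δ > 0, ∀ l, ∃ L, ∀ τ, IsNearPeriod X l δ τ → DensityLE L (B τ) ε

/-- Near-periods of `X` are near-periods of `y`, uniformly in the sense of `ControlsFamily`. -/
def Controls (X : ℝ → α) (y : ℝ → β) : Prop := ∀ ε > 0, ControlsFamily X (deviationSet y ε)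

/-- Near-periods of `X` almost preserve the set `A`. -/
def ControlsSet (X : ℝ → α) (A : Set ℝ) : Prop :=
  ControlsFamily X fun τ => {t | ¬(t ∈ A ↔ t + τ ∈ A)}

namespace ControlsFamily

variable {X : ℝ → α} {B B' : ℝ → Set ℝ}

theorem mono (h : ControlsFamily X B) (hB : ∀ τ, B' τ ⊆ B τ) : ControlsFamily X B' := by
  intro ε hε
  obtain ⟨δ, hδ, h⟩ := h ε hε
  refine ⟨δ, hδ, fun l => ?_⟩
  obtain ⟨L, h⟩ := h l
  exact ⟨L, fun τ hτ => (h τ hτ).mono le_rfl (hB τ) le_rfl⟩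

theorem union (h : ControlsFamily X B) (h' : ControlsFamily X B') :
    ControlsFamily X fun τ => B τ ∪ B' τ := by
  intro ε hε
  obtain ⟨δ, hδ, h⟩ := h _ (half_pos hε)
  obtain ⟨δ', hδ', h'⟩ := h' _ (half_pos hε)
  refine ⟨min δ δ', lt_min hδ hδ', fun l => ?_⟩
  obtain ⟨L, h⟩ := h l
  obtain ⟨L', h'⟩ := h' l
  refine ⟨max L L', fun τ hτ => ?_⟩
  rw [← add_halves ε]
  exact (h τ (hτ.mono le_rfl (min_le_left _ _))).union (h' τ (hτ.mono le_rfl (min_le_right _ _)))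
    (by positivity) (by positivity)

theorem biUnion {B : ℕ → ℝ → Set ℝ} (h : ∀ i, ControlsFamily X (B i)) (n : ℕ) :
    ControlsFamily X fun τ => ⋃ i ≤ n, B i τ := by
  induction n with
  | zero => simpa using h 0
  | succ n ih => simpa only [Set.biUnion_le_succ] using ih.union (h (n + 1))

theorem of_approx
    (h : ∀ ε > 0, ∃ B', ControlsFamily X B' ∧
      ∃ T l, DensityLE l T ε ∧ ∀ τ, B τ ⊆ B' τ ∪ (T ∪ (· + τ) ⁻¹' T)) :
    ControlsFamily X B := by
  intro ε hε
  have hε₃ : 0 < ε / 3 := by positivity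
  obtain ⟨B', hB', T, l₀, hT, hsub⟩ := h _ hε₃
  obtain ⟨δ, hδ, hB'⟩ := hB' _ hε₃
  refine ⟨δ, hδ, fun l => ?_⟩
  obtain ⟨L, hB'⟩ := hB' l
  refine ⟨max L (max l₀ l₀), fun τ hτ => ?_⟩
  exact ((hB' τ hτ).union (hT.union (hT.preimage_add τ) hε₃.le hε₃.le) hε₃.le
    (by positivity)).mono le_rfl (hsub τ) (by linarith)

end ControlsFamily

theorem edist_lt_ofReal_of_lipschitzWith {K : ℝ≥0} {φ : β → γ} (hφ : LipschitzWith K φ)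
    {x x' : β} {ε : ℝ} (h : edist x x' < ENNReal.ofReal (ε / (K + 1))) :
    edist (φ x) (φ x') < ENNReal.ofReal ε := by
  have hK : (0 : ℝ) < K + 1 := by positivity
  calc edist (φ x) (φ x') ≤ (K + 1) * edist x x' :=
        (hφ x x').trans (mul_le_mul_left le_self_add _)
    _ < (K + 1) * ENNReal.ofReal (ε / (K + 1)) :=
        ENNReal.mul_lt_mul_right (by simp) (by finiteness) h
    _ = ENNReal.ofReal ε := by
        rw [ENNReal.ofReal_div_of_pos hK, ENNReal.ofReal_add (by positivity) (by positivity)]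
        simp [ENNReal.mul_div_cancel]

namespace Controls

variable {X : ℝ → α} {y : ℝ → β} {z : ℝ → γ}

theorem refl (X : ℝ → α) : Controls X X := fun ε hε ε' hε' =>
  ⟨min ε ε', lt_min hε hε', fun l => ⟨l, fun _ hτ =>
    DensityLE.mono hτ le_rfl (deviationSet_anti (min_le_left _ _)) (min_le_right _ _)⟩⟩

theorem weylAPInMeasure (h : Controls X y) (hX : WeylAPInMeasure X) : WeylAPInMeasure y := by
  intro ε hε
  obtain ⟨δ, hδ, h⟩ := h ε hε ε hε
  obtain ⟨l, hl⟩ := hX δ hδ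
  obtain ⟨L, hL⟩ := h l
  exact ⟨L, hl.mono hL⟩

theorem comp_lipschitzWith (h : Controls X y) {K : ℝ≥0} {φ : β → γ} (hφ : LipschitzWith K φ) :
    Controls X (φ ∘ y) := fun ε hε =>
  (h (ε / (K + 1)) (by positivity)).mono fun τ t => by
    contrapose
    rw [notMem_deviationSet, notMem_deviationSet]
    exact fun ht => edist_lt_ofReal_of_lipschitzWith hφ ht

theorem prodMk (h : Controls X y) (h' : Controls X z) : Controls X fun t => (y t, z t) :=
  fun ε hε => ((h ε hε).union (h' ε hε)).mono fun _ => deviationSet_prodMk.subset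

theorem of_approx
    (h : ∀ ε > 0, ∃ z : ℝ → β, Controls X z ∧ ∀ t, edist (z t) (y t) < ENNReal.ofReal ε) :
    Controls X y := by
  intro ε hε
  obtain ⟨z, hz, hzy⟩ := h (ε / 3) (by positivity)
  refine (hz (ε / 3) (by positivity)).mono fun τ t => ?_
  contrapose
  rw [notMem_deviationSet, notMem_deviationSet]
  intro ht
  rw [← add_thirds ε]
  exact edist_lt_ofReal_add (edist_lt_ofReal_add (edist_comm (z t) (y t) ▸ hzy t) ht) (hzy _)

open scoped Classical in
theorem piecewise {z : ℝ → β} {A : Set ℝ} (hy : Controls X y) (hz : Controls X z)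
    (hA : ControlsSet X A) : Controls X (A.piecewise y z) := by
  refine fun ε hε => (((hy ε hε).union (hz ε hε)).union hA).mono fun τ t => ?_
  contrapose
  simp only [Set.mem_union, not_or, Set.mem_ofPred_eq, not_not, notMem_deviationSet]
  rintro ⟨⟨hty, htz⟩, htA⟩
  by_cases ht : t ∈ A
  · simpa [Set.piecewise, ht, htA.1 ht] using hty
  · simpa [Set.piecewise, ht, htA.not.1 ht] using htz

end Controls

section Level

/-- The values of `u` concentrate at level `c`: a band around `c`, however narrow, does not have
density at most `ε`. -/
def IsConcentrationLevel (u : ℝ → ℝ) (ε c : ℝ) : Prop :=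
  ∀ w > 0, ∀ L, ¬DensityLE L {t | |u t - c| ≤ w} ε

theorem exists_pairwise_four_mul_le_dist (S : Finset ℝ) :
    ∃ w > 0, (S : Set ℝ).Pairwise fun c c' => 4 * w ≤ dist c c' := by
  obtain ⟨C, hC, hS⟩ := S.finite_toSet.relatively_discrete
  obtain ⟨r, hr, hrC⟩ := ENNReal.lt_iff_exists_nnreal_btwn.1 hC
  refine ⟨r / 4, div_pos (mod_cast hr) four_pos, fun c hc c' hc' hne => ?_⟩
  have hdist := hrC.le.trans (hS c hc c' hc' hne)
  rw [edist_nndist, ENNReal.coe_le_coe] at hdist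
  rw [mul_div_cancel₀ _ four_ne_zero]
  exact_mod_cast hdist

/-- Almost periodicity forces each band around a concentration level to occupy a fixed proportion of
one window, and disjoint bands compete for that window. -/
theorem WeylAPInMeasure.card_mul_le_of_isConcentrationLevel {u : ℝ → ℝ} (hw : WeylAPInMeasure u)
    (hu : Measurable u) {ε : ℝ} (hε : 0 < ε) {S : Finset ℝ}
    (hS : ∀ c ∈ S, IsConcentrationLevel u (6 * ε) c) : S.card * ε ≤ 2 := by
  obtain ⟨w, hw₀, hsep⟩ := exists_pairwise_four_mul_le_dist S
  obtain ⟨L, hL, hwindow⟩ := hw.exists_densityLE_of_window (lt_min hw₀ hε) (min_le_right w ε)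
  set D : ℝ → Set ℝ := fun c => {t | |u t - c| < 2 * w} ∩ Set.Icc 0 (2 * L)
  have hD : ∀ c ∈ S, ENNReal.ofReal (ε * L) ≤ volume (D c) := by
    intro c hc
    by_contra! hlt
    refine hS c hc w hw₀ L (hwindow 0 _ {t | |u t - c| < 2 * w} (fun t ht τ hτ _ => ?_) hlt.le)
    replace hτ := (notMem_deviationSet.1 hτ).trans_le (ENNReal.ofReal_le_ofReal (min_le_left w ε))
    rw [edist_comm, edist_lt_ofReal, Real.dist_eq] at hτ
    calc |u (t + τ) - c| ≤ |u (t + τ) - u t| + |u t - c| := abs_sub_le _ _ _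
      _ < w + w := add_lt_add_of_lt_of_le hτ ht
      _ = 2 * w := (two_mul w).symm
  have hdisj : Set.PairwiseDisjoint (S : Set ℝ) D := fun c hc c' hc' hne =>
    Set.disjoint_left.2 fun t ⟨ht, _⟩ ⟨ht', _⟩ => by
      have hle : 4 * w ≤ dist c c' := hsep hc hc' hne
      have htri := dist_triangle_left c c' (u t)
      simp only [Real.dist_eq, Set.mem_ofPred_eq] at hle htri ht ht'
      linarith
  have hDm (c : ℝ) : MeasurableSet (D c) :=
    (measurableSet_lt (hu.sub_const c).abs measurable_const).inter measurableSet_Icc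
  have hsum : ENNReal.ofReal (S.card * (ε * L)) ≤ ENNReal.ofReal (2 * L) :=
    calc ENNReal.ofReal (S.card * (ε * L)) = S.card • ENNReal.ofReal (ε * L) := by
          rw [ENNReal.ofReal_mul (by positivity), ENNReal.ofReal_natCast, nsmul_eq_mul]
      _ ≤ ∑ c ∈ S, volume (D c) := S.card_nsmul_le_sum _ _ hD
      _ = volume (⋃ c ∈ S, D c) := (measure_biUnion_finset hdisj fun c _ => hDm c).symm
      _ ≤ volume (Set.Icc 0 (2 * L)) :=
          measure_mono (Set.iUnion₂_subset fun c _ => Set.inter_subset_right)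
      _ = ENNReal.ofReal (2 * L) := by simp
  rw [ENNReal.ofReal_le_ofReal_iff (by positivity), ← mul_assoc] at hsum
  exact le_of_mul_le_mul_right hsum hL

theorem WeylAPInMeasure.finite_setOf_isConcentrationLevel {u : ℝ → ℝ} (hw : WeylAPInMeasure u)
    (hu : Measurable u) {ε : ℝ} (hε : 0 < ε) : {c | IsConcentrationLevel u ε c}.Finite := by
  by_contra hinf
  obtain ⟨S, hS, hcard⟩ := Set.Infinite.exists_subset_card_eq hinf (⌊12 / ε⌋₊ + 1)
  have hle := hw.card_mul_le_of_isConcentrationLevel hu (ε := ε / 6) (by positivity) fun c hc => by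
    rw [show 6 * (ε / 6) = ε by ring]
    exact hS hc
  have hlt := Nat.lt_floor_add_one (12 / ε)
  rw [div_lt_iff₀ hε] at hlt
  rw [hcard] at hle
  push_cast at hle
  linarith

theorem WeylAPInMeasure.exists_level {u : ℝ → ℝ} (hw : WeylAPInMeasure u) (hu : Measurable u)
    {a b : ℝ} (hab : a < b) : ∃ c ∈ Set.Ioo a b, ∀ ε > 0, ¬ IsConcentrationLevel u ε c := by
  have hcount : (⋃ n : ℕ, {c | IsConcentrationLevel u (1 / (n + 1)) c}).Countable :=
    Set.countable_iUnion fun n =>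
      (hw.finite_setOf_isConcentrationLevel hu (by positivity)).countable
  obtain ⟨c, hc, hcab⟩ := (hcount.dense_compl ℝ).exists_mem_open isOpen_Ioo (Set.nonempty_Ioo.2 hab)
  refine ⟨c, hcab, fun ε hε hcε => hc ?_⟩
  obtain ⟨n, hn⟩ := exists_nat_one_div_lt hε
  exact Set.mem_iUnion.2 ⟨n, fun w hw L h => hcε w hw L (h.mono le_rfl subset_rfl hn.le)⟩

theorem Controls.exists_controlsSet_setOf_lt {X : ℝ → α} {u : ℝ → ℝ} (h : Controls X u)
    (hX : WeylAPInMeasure X) (hu : Measurable u) {a b : ℝ} (hab : a < b) :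
    ∃ c ∈ Set.Ioo a b, ControlsSet X {t | u t < c} := by
  obtain ⟨c, hc, hlevel⟩ := (h.weylAPInMeasure hX).exists_level hu hab
  refine ⟨c, hc, ControlsFamily.of_approx fun ε hε => ?_⟩
  obtain ⟨w, hw, L, hL⟩ : ∃ w > 0, ∃ L, DensityLE L {t | |u t - c| ≤ w} ε := by
    simpa only [IsConcentrationLevel, not_forall, not_not, exists_prop] using hlevel ε hε
  refine ⟨_, h w hw, _, L, hL, fun τ t => ?_⟩
  contrapose
  simp only [Set.mem_union, not_or, Set.mem_preimage, Set.mem_ofPred_eq, not_le, not_not,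
    notMem_deviationSet]
  rintro ⟨hτ, ht, -⟩
  rw [edist_lt_ofReal, Real.dist_eq, abs_lt] at hτ
  constructor <;> intro h' <;> rcases lt_abs.1 ht with h | h <;> linarith

end Level
end Control

section Selection

variable {α β : Type*} [PseudoEMetricSpace α] [PseudoEMetricSpace β] {X : ℝ → α}

section FirstIndex

theorem ControlsFamily.find_ne {p : ℕ → ℝ → Prop} [∀ t, DecidablePred (p · t)]
    (hp : ∀ i, ControlsSet X {t | p i t}) (hex : ∀ t, ∃ i, p i t)
    (htail : ∀ ε > 0, ∃ n l, DensityLE l {t | ∀ i ≤ n, ¬p i t} ε) :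
    ControlsFamily X fun τ => {t | Nat.find (hex t) ≠ Nat.find (hex (t + τ))} := by
  refine ControlsFamily.of_approx fun ε hε => ?_
  obtain ⟨n, l, hn⟩ := htail ε hε
  refine ⟨_, ControlsFamily.biUnion hp n, _, l, hn, fun τ t => ?_⟩
  contrapose
  simp only [Set.mem_union, not_or, Set.mem_iUnion, Set.mem_preimage, Set.mem_ofPred_eq,
    not_exists, not_not]
  rintro ⟨hiff, ht, -⟩
  push Not at ht
  obtain ⟨i, hin, hi⟩ := ht
  have hle : Nat.find (hex t) ≤ n := (Nat.find_min' _ hi).trans hin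
  have hge : Nat.find (hex (t + τ)) ≤ Nat.find (hex t) :=
    Nat.find_min' _ ((hiff _ hle).1 (Nat.find_spec (hex t)))
  exact (Nat.find_min' _ ((hiff _ (hge.trans hle)).2 (Nat.find_spec (hex (t + τ))))).antisymm hge

theorem Controls.of_ne {y : ℝ → β} (h : ControlsFamily X fun τ => {t | y t ≠ y (t + τ)}) :
    Controls X y := fun ε hε => h.mono fun τ t => by
  contrapose
  simp only [Set.mem_ofPred_eq, not_not, notMem_deviationSet]
  intro ht
  simpa [ht] using hε

variable {Z : ℝ → β} {K : ℝ≥0} {φ : ℕ → β → ℝ} {a b : ℝ}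

theorem WeylAPInMeasure.exists_densityLE_forall_le (hZ : WeylAPInMeasure Z)
    (hZm : StronglyMeasurable Z) (hφ : ∀ i, LipschitzWith K (φ i))
    (hsmall : ∀ t, ∃ i, φ i (Z t) < a) (hab : a < b) {ε : ℝ} (hε : 0 < ε) :
    ∃ n l, DensityLE l {t | ∀ i ≤ n, b ≤ φ i (Z t)} ε := by
  refine hZ.exists_densityLE_of_antitone (B' := fun n => {t | ∀ i ≤ n, a ≤ φ i (Z t)})
    (fun n => ?_) (fun m n hmn t ht i hi => ht i (hi.trans hmn)) ?_
    (δ := (b - a) / (K + 1)) (div_pos (sub_pos.2 hab) (by positivity)) (fun n t ht τ hτ i hi => ?_)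
    hε
  · simp only [Set.ofPred_forall]
    exact .iInter fun i => .iInter fun _ => measurableSet_le measurable_const
      ((hφ i).continuous.comp_stronglyMeasurable hZm).measurable
  · refine Set.eq_empty_of_forall_notMem fun t ht => ?_
    obtain ⟨i, hi⟩ := hsmall t
    exact hi.not_ge (Set.mem_iInter.1 ht i i le_rfl)
  · have hlt := edist_lt_ofReal_of_lipschitzWith (hφ i) (notMem_deviationSet.1 hτ)
    rw [edist_lt_ofReal, Real.dist_eq, abs_lt] at hlt
    linarith [ht i hi]

theorem exists_controlled_index (hX : WeylAPInMeasure X) (hZ : Controls X Z)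
    (hZm : StronglyMeasurable Z) (hφ : ∀ i, LipschitzWith K (φ i))
    (hsmall : ∀ t, ∃ i, φ i (Z t) < a) (hab : a < b) :
    ∃ ι : ℝ → ℕ, Measurable ι ∧ ControlsFamily X (fun τ => {t | ι t ≠ ι (t + τ)}) ∧
      ∀ t, φ (ι t) (Z t) < b := by
  classical
  obtain ⟨m, ham, hmb⟩ := exists_between hab
  have hmeas (i : ℕ) : Measurable fun t => φ i (Z t) :=
    ((hφ i).continuous.comp_stronglyMeasurable hZm).measurable
  choose c hc hcontrol using fun i =>
    (hZ.comp_lipschitzWith (hφ i)).exists_controlsSet_setOf_lt hX (hmeas i) hmb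
  have hex (t : ℝ) : ∃ i, φ i (Z t) < c i :=
    (hsmall t).imp fun i hi => (hi.trans ham).trans (hc i).1
  refine ⟨fun t => Nat.find (hex t),
    measurable_find hex fun i => measurableSet_lt (hmeas i) measurable_const,
    ControlsFamily.find_ne hcontrol hex fun ε hε => ?_,
    fun t => (Nat.find_spec (hex t)).trans (hc _).2⟩
  obtain ⟨n, l, hn⟩ := (hZ.weylAPInMeasure hX).exists_densityLE_forall_le hZm hφ hsmall ham hε
  exact ⟨n, l, hn.mono le_rfl (fun t ht i hi => (hc i).1.le.trans (not_lt.1 (ht i hi))) le_rfl⟩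

end FirstIndex

variable {U : Type*} [MetricSpace U]

section ApproximateSelection

theorem lipschitzWith_infDist_right (x : U) :
    LipschitzWith 1 fun A : Closeds U => Metric.infDist x A := by
  intro A B
  rw [ENNReal.coe_one, one_mul, Closeds.edist_eq]
  rcases eq_or_ne (Metric.hausdorffEDist (A : Set U) B) ⊤ with htop | hfin
  · exact htop ▸ le_top
  rw [edist_dist, ENNReal.ofReal_le_iff_le_toReal hfin, Real.dist_eq, abs_sub_le_iff,
    sub_le_iff_le_add', sub_le_iff_le_add']
  refine ⟨?_, Metric.infDist_le_infDist_add_hausdorffDist hfin⟩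
  rw [Metric.hausdorffEDist_comm] at hfin ⊢
  exact Metric.infDist_le_infDist_add_hausdorffDist hfin

theorem lipschitzWith_infDist :
    LipschitzWith (1 + 1) fun z : U × Closeds U => Metric.infDist z.1 z.2 :=
  LipschitzWith.uncurry (fun A : Closeds U => Metric.lipschitz_infDist_pt (A : Set U))
    lipschitzWith_infDist_right

/-- How far `x` is from being a best approximation of `z.1` by a point of the closed set `z.2`. -/
noncomputable def selectionDefect (x : U) (z : U × Closeds U) : ℝ :=
  max (Metric.infDist x z.2) (dist x z.1 - Metric.infDist z.1 z.2)

theorem lipschitzWith_selectionDefect (x : U) : LipschitzWith 3 (selectionDefect x) := by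
  have hleft : LipschitzWith 1 fun z : U × Closeds U => Metric.infDist x z.2 := by
    simpa only [mul_one, Function.comp_def] using
      (lipschitzWith_infDist_right x).comp LipschitzWith.prod_snd
  have hdist : LipschitzWith 1 fun z : U × Closeds U => dist x z.1 := by
    simpa only [mul_one, Function.comp_def] using
      (LipschitzWith.dist_right x).comp LipschitzWith.prod_fst
  refine (hleft.max (hdist.sub lipschitzWith_infDist)).weaken (max_le ?_ ?_) <;> norm_num

theorem exists_seq_range_subset_closure {ι : Type*} [Nonempty ι] {f : ι → β}
    (hf : IsSeparable (Set.range f)) :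
    ∃ T : ℕ → ι, Set.range f ⊆ closure (Set.range (f ∘ T)) := by
  obtain ⟨C, hC, hcount, hdense⟩ := hf.exists_countable_dense_subset
  obtain ⟨d, rfl⟩ := hcount.exists_eq_range
    (closure_nonempty_iff.1 ((Set.range_nonempty f).mono hdense))
  choose T hT using Set.range_subset_iff.1 hC
  exact ⟨T, (funext hT : f ∘ T = d) ▸ hdense⟩

theorem exists_seq_selectionDefect_lt {y : ℝ → U} {F : ℝ → Closeds U}
    (hy : StronglyMeasurable y) (hF : StronglyMeasurable F)
    (hne : ∀ t, (F t : Set U).Nonempty) {δ : ℝ} (hδ : 0 < δ) :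
    ∃ u : ℕ → U, ∀ t, ∃ i, selectionDefect (u i) (y t, F t) < δ := by
  obtain ⟨T, hT⟩ := exists_seq_range_subset_closure (hy.prodMk hF).isSeparable_range
  choose u huF hu using fun i =>
    (Metric.infDist_lt_iff (hne (T i))).1 (lt_add_of_pos_right (Metric.infDist (y (T i)) _)
      (half_pos hδ))
  refine ⟨u, fun t => ?_⟩
  obtain ⟨_, ⟨i, rfl⟩, hi⟩ :=
    EMetric.mem_closure_iff.1 (hT ⟨t, rfl⟩) (ENNReal.ofReal (δ / 2 / ((3 : ℝ≥0) + 1)))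
      (by positivity)
  have hclose := edist_lt_ofReal_of_lipschitzWith (lipschitzWith_selectionDefect (u i)) hi
  rw [edist_lt_ofReal, Real.dist_eq, abs_lt] at hclose
  have hexact : selectionDefect (u i) (y (T i), F (T i)) < δ / 2 := by
    refine max_lt (by simpa [Metric.infDist_zero_of_mem (huF i)] using hδ) ?_
    rw [sub_lt_iff_lt_add', dist_comm]
    exact hu i
  exact ⟨i, by simpa using add_lt_add hclose.2 hexact⟩

theorem exists_approx_selection (hX : WeylAPInMeasure X) {y : ℝ → U} {F : ℝ → Closeds U}
    (hy : StronglyMeasurable y) (hF : StronglyMeasurable F) (hXy : Controls X y)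
    (hXF : Controls X F) (hne : ∀ t, (F t : Set U).Nonempty) {δ : ℝ} (hδ : 0 < δ) :
    ∃ z : ℝ → U, StronglyMeasurable z ∧ Controls X z ∧ (∀ t, Metric.infDist (z t) (F t) ≤ δ) ∧
      ∀ t, dist (z t) (y t) ≤ Metric.infDist (y t) (F t) + δ := by
  obtain ⟨u, hu⟩ := exists_seq_selectionDefect_lt hy hF hne (half_pos hδ)
  obtain ⟨ι, hιm, hι, hδι⟩ := exists_controlled_index hX (hXy.prodMk hXF) (hy.prodMk hF)
    (fun i => lipschitzWith_selectionDefect (u i)) hu (half_lt_self hδ)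
  refine ⟨u ∘ ι, StronglyMeasurable.of_discrete.comp_measurable hιm,
    Controls.of_ne (hι.mono fun τ t => mt (congrArg u)),
    fun t => (max_lt_iff.1 (hδι t)).1.le, fun t => ?_⟩
  exact sub_le_iff_le_add'.1 (max_lt_iff.1 (hδι t)).2.le

end ApproximateSelection

end Selection

section ExactSelection

variable {α U : Type*} [PseudoEMetricSpace α] {X : ℝ → α} [MetricSpace U]

theorem tendsto_div_two_pow_atTop_nhds_zero (C : ℝ) :
    Tendsto (fun n : ℕ => C / 2 ^ n) atTop (𝓝 0) :=
  tendsto_const_nhds.div_atTop (tendsto_pow_atTop_atTop_of_one_lt one_lt_two)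

theorem Controls.exists_tendsto_of_le_geometric [CompleteSpace U] {z : ℕ → ℝ → U}
    {C : ℝ}
    (hzm : ∀ n, StronglyMeasurable (z n)) (hz : ∀ n, Controls X (z n))
    (hdist : ∀ n t, dist (z n t) (z (n + 1) t) ≤ C / 2 / 2 ^ n) :
    ∃ f : ℝ → U, StronglyMeasurable f ∧ Controls X f ∧
      ∀ t, Tendsto (fun n => z n t) atTop (𝓝 (f t)) := by
  choose f hf using fun t =>
    cauchySeq_tendsto_of_complete (cauchySeq_of_le_geometric_two fun n => hdist n t)
  refine ⟨f, stronglyMeasurable_of_tendsto atTop hzm (tendsto_pi_nhds.2 hf),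
    Controls.of_approx fun ε hε => ?_, hf⟩
  obtain ⟨n, hn⟩ := ((tendsto_div_two_pow_atTop_nhds_zero C).eventually_lt_const hε).exists
  refine ⟨z n, hz n, fun t => edist_lt_ofReal.2 (lt_of_le_of_lt ?_ hn)⟩
  exact dist_le_of_le_geometric_two_of_tendsto (fun n => hdist n t) (hf t) n

variable {g : ℝ → U} {F : ℝ → Closeds U}

theorem exists_approx_selection_seq (hX : WeylAPInMeasure X) (hg : StronglyMeasurable g)
    (hF : StronglyMeasurable F) (hXg : Controls X g) (hXF : Controls X F)
    (hne : ∀ t, (F t : Set U).Nonempty) {ε : ℝ} (hε : 0 < ε) :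
    ∃ z : ℕ → ℝ → U, z 0 = g ∧ (∀ n, StronglyMeasurable (z n)) ∧ (∀ n, Controls X (z n)) ∧
      ∀ n t, Metric.infDist (z (n + 1) t) (F t) ≤ ε / 2 ^ n ∧
        dist (z (n + 1) t) (z n t) ≤ Metric.infDist (z n t) (F t) + ε / 2 ^ n := by
  have hstep (n : ℕ) (y : {y : ℝ → U // StronglyMeasurable y ∧ Controls X y}) :
      ∃ y' : {y : ℝ → U // StronglyMeasurable y ∧ Controls X y}, ∀ t,
        Metric.infDist (y'.1 t) (F t) ≤ ε / 2 ^ n ∧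
          dist (y'.1 t) (y.1 t) ≤ Metric.infDist (y.1 t) (F t) + ε / 2 ^ n := by
    obtain ⟨y', hy'm, hy', hdist, hstep⟩ := exists_approx_selection hX y.2.1 hF y.2.2 hXF hne
      (show 0 < ε / 2 ^ n by positivity)
    exact ⟨⟨y', hy'm, hy'⟩, fun t => ⟨hdist t, hstep t⟩⟩
  choose next hnext using hstep
  let z (n : ℕ) : {y : ℝ → U // StronglyMeasurable y ∧ Controls X y} :=
    Nat.rec ⟨g, hg, hXg⟩ next n
  exact ⟨fun n => (z n).1, rfl, fun n => (z n).2.1, fun n => (z n).2.2, fun n => hnext n (z n)⟩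

theorem exists_selection_dist_le_add [CompleteSpace U] (hX : WeylAPInMeasure X)
    (hg : StronglyMeasurable g) (hF : StronglyMeasurable F) (hXg : Controls X g)
    (hXF : Controls X F) (hne : ∀ t, (F t : Set U).Nonempty) {ε : ℝ} (hε : 0 < ε) :
    ∃ f : ℝ → U, StronglyMeasurable f ∧ Controls X f ∧ (∀ t, f t ∈ F t) ∧
      ∀ t, dist (f t) (g t) ≤ Metric.infDist (g t) (F t) + ε := by
  obtain ⟨z, hz₀, hzm, hz, happrox⟩ := exists_approx_selection_seq hX hg hF hXg hXF hne
    (show 0 < ε / 4 by positivity)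
  have hstep (n : ℕ) (t : ℝ) :
      dist (z (n + 1) t) (z (n + 2) t) ≤ 3 * ε / 4 / 2 / 2 ^ n := by
    calc dist (z (n + 1) t) (z (n + 2) t) = dist (z (n + 2) t) (z (n + 1) t) := dist_comm _ _
      _ ≤ ε / 4 / 2 ^ n + ε / 4 / 2 ^ (n + 1) :=
          (happrox (n + 1) t).2.trans (add_le_add_left (happrox n t).1 _)
      _ = 3 * ε / 4 / 2 / 2 ^ n := by rw [pow_succ]; field
  obtain ⟨f, hfm, hf, hlim⟩ := Controls.exists_tendsto_of_le_geometric (fun n => hzm (n + 1))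
    (fun n => hz (n + 1)) hstep
  refine ⟨f, hfm, hf, fun t => ?_, fun t => ?_⟩
  · refine ((F t).isClosed.mem_iff_infDist_zero (hne t)).2 (tendsto_nhds_unique
      (((Metric.continuous_infDist_pt _).tendsto _).comp (hlim t))
      (squeeze_zero (fun n => Metric.infDist_nonneg) (fun n => (happrox n t).1)
        (tendsto_div_two_pow_atTop_nhds_zero _)))
  · have htail := dist_le_of_le_geometric_two_of_tendsto₀ (fun n => hstep n t) (hlim t)
    have hfirst := (happrox 0 t).2
    rw [hz₀, pow_zero, div_one] at hfirst
    linarith [dist_triangle_left (f t) (g t) (z (0 + 1) t)]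

section Glue

variable {β : Type*} {c : ℕ → ℝ} {s : ℝ → ℝ} {φ : ℕ → ℝ → β}

open scoped Classical in
/-- The gluing that follows the coarse approximation `φ 0` and switches to `φ (n + 1)` below level
`c n` of `s`, carried out for the first `n` levels. -/
noncomputable def glue (c : ℕ → ℝ) (s : ℝ → ℝ) (φ : ℕ → ℝ → β) : ℕ → ℝ → β
  | 0 => φ 0
  | n + 1 => {t | s t < c n}.piecewise (φ (n + 1)) (glue c s φ n)

theorem exists_glue_eq (c : ℕ → ℝ) (s : ℝ → ℝ) (φ : ℕ → ℝ → β) (n : ℕ) (t : ℝ) :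
    ∃ k ≤ n, glue c s φ n t = φ k t ∧ (k = n ∨ c k ≤ s t) := by
  induction n with
  | zero => exact ⟨0, le_rfl, rfl, .inl rfl⟩
  | succ n ih =>
    by_cases ht : s t < c n
    · exact ⟨n + 1, le_rfl, Set.piecewise_eq_of_mem {t | s t < c n} _ _ ht, .inl rfl⟩
    · obtain ⟨k, hk, heq, hkn⟩ := ih
      refine ⟨k, hk.trans n.le_succ,
        (Set.piecewise_eq_of_notMem {t | s t < c n} _ _ ht).trans heq, .inr ?_⟩
      exact hkn.elim (fun h => h ▸ not_lt.1 ht) id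

theorem glue_eq_of_lt (hc : Antitone c) {n : ℕ} {t : ℝ} (ht : s t < c n) :
    glue c s φ n t = φ n t := by
  obtain ⟨k, hk, heq, rfl | hle⟩ := exists_glue_eq c s φ n t
  · exact heq
  · exact absurd (ht.trans_le (hc hk)) hle.not_gt

theorem stronglyMeasurable_glue [TopologicalSpace β] (hs : Measurable s)
    (hφ : ∀ n, StronglyMeasurable (φ n)) (n : ℕ) : StronglyMeasurable (glue c s φ n) := by
  induction n with
  | zero => exact hφ 0
  | succ n ih => exact (hφ (n + 1)).piecewise (measurableSet_lt hs measurable_const) ih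

theorem Controls.glue [PseudoEMetricSpace β] (hφ : ∀ n, Controls X (φ n))
    (hc : ∀ n, ControlsSet X {t | s t < c n}) (n : ℕ) : Controls X (glue c s φ n) := by
  induction n with
  | zero => exact hφ 0
  | succ n ih => exact (hφ (n + 1)).piecewise ih (hc n)

end Glue

section Rate

variable {c : ℕ → ℝ} {φ : ℕ → ℝ → U} {s : ℝ → ℝ}

theorem dist_glue_succ_le (hc : Antitone c) (hc₁ : ∀ n, c n ≤ 1 / 2 ^ n)
    (hφ : ∀ n t, dist (φ n t) (g t) ≤ s t + 1 / 2 ^ n) (n : ℕ) (t : ℝ) :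
    dist (glue c s φ n t) (glue c s φ (n + 1) t) ≤ 8 / 2 / 2 ^ n := by
  by_cases ht : s t < c n
  · have hsucc : glue c s φ (n + 1) t = φ (n + 1) t := Set.piecewise_eq_of_mem _ _ _ ht
    have hpow : (1 : ℝ) / 2 ^ (n + 1) ≤ 1 / 2 ^ n :=
      one_div_pow_le_one_div_pow_of_le one_le_two n.le_succ
    rw [glue_eq_of_lt hc ht, hsucc, show (8 : ℝ) / 2 / 2 ^ n = 4 * (1 / 2 ^ n) by ring]
    linarith [dist_triangle_right (φ n t) (φ (n + 1) t) (g t), hφ n t, hφ (n + 1) t, hc₁ n]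
  · have hsucc : glue c s φ (n + 1) t = glue c s φ n t := Set.piecewise_eq_of_notMem _ _ _ ht
    rw [hsucc, dist_self]
    positivity

theorem dist_glue_le {η : ℝ → ℝ} {r : ℕ → ℝ}
    (hη : MonotoneOn η (Set.Ici 0)) (hr : ∀ n, 0 ≤ r n) (hrc : ∀ n, r n ≤ c n) (hs : ∀ t, 0 ≤ s t)
    (hφ : ∀ n t, dist (φ n t) (g t) ≤ s t + min (η (r n)) (1 / 2 ^ n)) (n : ℕ) (t : ℝ) :
    dist (glue c s φ n t) (g t) ≤ s t + max (η (s t)) (1 / 2 ^ n) := by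
  obtain ⟨k, -, heq, hk⟩ := exists_glue_eq c s φ n t
  rw [heq]
  refine (hφ k t).trans (add_le_add_right ?_ _)
  rcases hk with rfl | hk
  · exact (min_le_right _ _).trans (le_max_right _ _)
  · exact (min_le_left _ _).trans
      ((hη (hr k) (hs t) ((hrc k).trans hk)).trans (le_max_left _ _))

end Rate

/-- At scale `2⁻ⁿ` of `s t = infDist (g t) (F t)` the error `η (s t)` is at least `η (2⁻ⁿ⁻¹) > 0`,
so a selection with constant error suffices there; these are glued along controlled levels of
`s`. -/
theorem exists_selection_dist_le_add_comp [CompleteSpace U] (hX : WeylAPInMeasure X)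
    (hg : StronglyMeasurable g) (hF : StronglyMeasurable F) (hXg : Controls X g)
    (hXF : Controls X F) (hne : ∀ t, (F t : Set U).Nonempty) {η : ℝ → ℝ}
    (hη : MonotoneOn η (Set.Ici 0)) (hη₀ : 0 ≤ η 0) (hηpos : ∀ t > 0, 0 < η t) :
    ∃ f : ℝ → U, StronglyMeasurable f ∧ Controls X f ∧ (∀ t, f t ∈ F t) ∧
      ∀ t, dist (f t) (g t) ≤ Metric.infDist (g t) (F t) + η (Metric.infDist (g t) (F t)) := by
  set s : ℝ → ℝ := fun t => Metric.infDist (g t) (F t)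
  have hs₀ (t : ℝ) : 0 ≤ s t := Metric.infDist_nonneg
  have hsm : Measurable s :=
    (lipschitzWith_infDist.continuous.comp_stronglyMeasurable (hg.prodMk hF)).measurable
  have hXs : Controls X s := (hXg.prodMk hXF).comp_lipschitzWith lipschitzWith_infDist
  choose c hc hcontrol using fun n : ℕ => hXs.exists_controlsSet_setOf_lt hX hsm
    (one_div_pow_lt_one_div_pow_of_lt one_lt_two n.lt_succ_self)
  have hanti : Antitone c := antitone_nat_of_succ_le fun n => ((hc (n + 1)).2.trans (hc n).1).le
  choose φ hφm hφ hφF hφg using fun n : ℕ => exists_selection_dist_le_add hX hg hF hXg hXF hne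
    (lt_min (hηpos (1 / 2 ^ (n + 1)) (by positivity)) (show 0 < (1 : ℝ) / 2 ^ n by positivity))
  obtain ⟨f, hfm, hf, hlim⟩ := Controls.exists_tendsto_of_le_geometric
    (stronglyMeasurable_glue hsm hφm) (Controls.glue hφ hcontrol)
    (dist_glue_succ_le hanti (fun n => (hc n).2.le) fun n t =>
      (hφg n t).trans (add_le_add_right (min_le_right _ _) _))
  refine ⟨f, hfm, hf, fun t => (F t).isClosed.mem_of_tendsto (hlim t) (.of_forall fun n => ?_),
    fun t => ?_⟩
  · obtain ⟨k, -, heq, -⟩ := exists_glue_eq c s φ n t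
    exact heq ▸ hφF k t
  · have hηs : max (η (s t)) 0 = η (s t) :=
      max_eq_left (hη₀.trans (hη (Set.mem_Ici.2 le_rfl) (hs₀ t) (hs₀ t)))
    refine hηs ▸ le_of_tendsto_of_tendsto' ((hlim t).dist tendsto_const_nhds)
      (tendsto_const_nhds.add
        (tendsto_const_nhds.max (tendsto_div_two_pow_atTop_nhds_zero 1))) fun n => ?_
    exact dist_glue_le hη (fun n => by positivity) (fun n => (hc n).1.le) hs₀ hφg n t

end ExactSelection

section WindowMean

/-- The mean of `φ` over every interval of length `l` is at most `c`. -/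
def WindowMeanLE (φ : ℝ → ℝ≥0∞) (l c : ℝ) : Prop :=
  ∀ ξ, ∫⁻ t in Set.Icc ξ (ξ + l), φ t ≤ ENNReal.ofReal (c * l)

theorem weylD_le_ofReal_rpow_iff {α : Type*} {d : α → α → ℝ} {p l c : ℝ} {f g : ℝ → α}
    (hp : 0 < p) (hl : 0 < l) (hc : 0 ≤ c) :
    weylD d p l f g ≤ ENNReal.ofReal (c ^ (1 / p)) ↔
      WindowMeanLE (fun t => ENNReal.ofReal (d (f t) (g t) ^ p)) l c := by
  have hl' : ENNReal.ofReal l ≠ 0 := by simpa using hl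
  rw [weylD, ← ENNReal.ofReal_rpow_of_nonneg hc (by positivity),
    ENNReal.rpow_le_rpow_iff (by positivity), iSup_le_iff]
  refine forall_congr' fun ξ => ?_
  rw [one_div, ENNReal.ofReal_inv_of_pos hl, mul_comm, ← div_eq_mul_inv,
    ENNReal.div_le_iff hl' ENNReal.ofReal_ne_top, ← ENNReal.ofReal_mul hc]

namespace WindowMeanLE

variable {φ ψ : ℝ → ℝ≥0∞} {l c c' : ℝ}

theorem mono (h : WindowMeanLE ψ l c) (hφψ : ∀ t, φ t ≤ ψ t) : WindowMeanLE φ l c :=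
  fun ξ => (lintegral_mono hφψ).trans (h ξ)

theorem mono_right (h : WindowMeanLE φ l c) (hl : 0 ≤ l) (hc : c ≤ c') : WindowMeanLE φ l c' :=
  fun ξ => (h ξ).trans (by gcongr)

theorem two_mul_of_le (h : WindowMeanLE φ l c) (hl : 0 < l) (hc : 0 ≤ c) {L : ℝ} (hL : l ≤ L) :
    WindowMeanLE φ L (2 * c) := by
  have hdensity (a b : ℝ) :
      volume.withDensity φ (Set.Icc a b) = ∫⁻ t in Set.Icc a b, φ t :=
    withDensity_apply _ measurableSet_Icc
  intro ξ
  rw [← hdensity]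
  exact measure_Icc_le_of_forall_measure_Icc_le hl hc
    (fun ζ => (hdensity _ _).trans_le (h ζ)) hL ξ

theorem comp_add (h : WindowMeanLE φ l c) (τ : ℝ) : WindowMeanLE (fun t => φ (t + τ)) l c := by
  intro ξ
  rw [(measurePreserving_add_right volume τ).setLIntegral_comp_emb
    (MeasurableEquiv.addRight τ).measurableEmbedding, Set.image_add_const_Icc, add_right_comm]
  exact h (ξ + τ)

theorem const {a : ℝ} (ha : 0 ≤ a) : WindowMeanLE (fun _ => ENNReal.ofReal a) l a := by
  intro ξ
  simp [ENNReal.ofReal_mul ha]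

theorem const_mul (h : WindowMeanLE φ l c) {a : ℝ} (ha : 0 ≤ a) :
    WindowMeanLE (fun t => ENNReal.ofReal a * φ t) l (a * c) := by
  intro ξ
  rw [lintegral_const_mul' _ _ ENNReal.ofReal_ne_top, mul_assoc, ENNReal.ofReal_mul ha]
  gcongr
  exact h ξ

theorem add (h : WindowMeanLE φ l c) (h' : WindowMeanLE ψ l c') (hφ : Measurable φ)
    (hl : 0 ≤ l) (hc : 0 ≤ c) (hc' : 0 ≤ c') :
    WindowMeanLE (fun t => φ t + ψ t) l (c + c') := by
  intro ξ
  rw [lintegral_add_left hφ, add_mul, ENNReal.ofReal_add (by positivity) (by positivity)]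
  exact add_le_add (h ξ) (h' ξ)

end WindowMeanLE

theorem DensityLE.windowMeanLE_indicator {T : Set ℝ} {l L c : ℝ} (h : DensityLE l T c)
    (hT : MeasurableSet T) (hL : l ≤ L) : WindowMeanLE (T.indicator 1) L c := by
  intro ξ
  rw [lintegral_indicator_one hT, Measure.restrict_apply hT]
  exact h.2 L hL ξ

end WindowMean

section NearPeriodsAndWeylDistance

variable {α : Type*} [PseudoEMetricSpace α] {y : ℝ → α} {d : α → α → ℝ} {p l ε τ : ℝ}

theorem isNearPeriod_of_weylD_le (hy : StronglyMeasurable y)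
    (hd : ∀ s t, min 1 (edist (y s) (y t)) ≤ ENNReal.ofReal (d (y s) (y t)))
    (hp : 0 < p) (hl : 0 < l) (hε : 0 < ε) (hε₁ : ε ≤ 1)
    (h : weylD d p l y (fun t => y (t + τ)) ≤ ENNReal.ofReal ((ε ^ p * (ε / 2)) ^ (1 / p))) :
    IsNearPeriod y l ε τ := by
  rw [weylD_le_ofReal_rpow_iff hp hl (by positivity)] at h
  have hdev (t : ℝ) (ht : t ∈ deviationSet y ε τ) : ε ≤ d (y t) (y (t + τ)) := by
    have hε' : ENNReal.ofReal ε ≤ min 1 (edist (y t) (y (t + τ))) :=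
      le_min (ENNReal.ofReal_le_one.2 hε₁) ht
    exact (ENNReal.ofReal_le_ofReal_iff'.1 (hε'.trans (hd _ _))).resolve_right hε.not_ge
  suffices ∀ ξ, volume (deviationSet y ε τ ∩ Set.Icc ξ (ξ + l)) ≤ ENNReal.ofReal (ε / 2 * l) by
    simpa [IsNearPeriod, mul_div_cancel₀] using DensityLE.of_forall_window hl (by positivity) this
  intro ξ
  have hεp : ENNReal.ofReal (ε ^ p) ≠ 0 := by simpa using Real.rpow_pos_of_pos hε p
  rw [← ENNReal.mul_le_mul_iff_right hεp ENNReal.ofReal_ne_top]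
  calc ENNReal.ofReal (ε ^ p) * volume (deviationSet y ε τ ∩ Set.Icc ξ (ξ + l))
      = ∫⁻ _ in deviationSet y ε τ ∩ Set.Icc ξ (ξ + l), ENNReal.ofReal (ε ^ p) :=
        (setLIntegral_const _ _).symm
    _ ≤ ∫⁻ t in deviationSet y ε τ ∩ Set.Icc ξ (ξ + l),
          ENNReal.ofReal (d (y t) (y (t + τ)) ^ p) :=
        setLIntegral_mono' ((measurableSet_deviationSet hy).inter measurableSet_Icc) fun t ht =>
          ENNReal.ofReal_le_ofReal (Real.rpow_le_rpow hε.le (hdev t ht.1) hp.le)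
    _ ≤ ∫⁻ t in Set.Icc ξ (ξ + l), ENNReal.ofReal (d (y t) (y (t + τ)) ^ p) :=
        lintegral_mono_set Set.inter_subset_right
    _ ≤ ENNReal.ofReal (ε ^ p * (ε / 2) * l) := h ξ
    _ = ENNReal.ofReal (ε ^ p) * ENNReal.ofReal (ε / 2 * l) := by
        rw [mul_assoc, ENNReal.ofReal_mul (by positivity)]

theorem MemWp.weylAPInMeasure {x₀ : α} (h : MemWp d p x₀ y) (hy : StronglyMeasurable y)
    (hd : ∀ s t, min 1 (edist (y s) (y t)) ≤ ENNReal.ofReal (d (y s) (y t))) (hp : 0 < p) :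
    WeylAPInMeasure y := by
  intro ε hε
  have hε₁ : 0 < min ε 1 := lt_min hε one_pos
  obtain ⟨l, hl, hdense⟩ := h.2 ((min ε 1 ^ p * (min ε 1 / 2)) ^ (1 / p)) (by positivity)
  exact ⟨l, hdense.mono fun τ hτ => (isNearPeriod_of_weylD_le hy hd hp hl hε₁ (min_le_right _ _)
    (le_of_lt hτ)).mono le_rfl (min_le_left _ _)⟩

theorem exists_isNearPeriod_of_weylDinf_lt (hy : StronglyMeasurable y)
    (hd : ∀ s t, min 1 (edist (y s) (y t)) ≤ ENNReal.ofReal (d (y s) (y t)))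
    (hε : 0 < ε) (hε₁ : ε ≤ 1)
    (h : weylDinf d 1 y (fun t => y (t + τ)) < ENNReal.ofReal (ε * (ε / 2))) :
    ∃ l, IsNearPeriod y l ε τ := by
  obtain ⟨l, hlt, hl⟩ := ((eventually_lt_of_limsup_lt h).and (eventually_gt_atTop 0)).exists
  exact ⟨l, isNearPeriod_of_weylD_le hy hd one_pos hl hε hε₁ (by simpa using hlt.le)⟩

theorem IsNearPeriod.weylDinf_le (h : IsNearPeriod y l ε τ) (hy : StronglyMeasurable y)
    (hd : ∀ s t, ENNReal.ofReal (d (y s) (y t)) ≤ min 1 (edist (y s) (y t))) (hε : 0 ≤ ε) :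
    weylDinf d 1 y (fun t => y (t + τ)) ≤ ENNReal.ofReal (ε + ε) := by
  refine limsup_le_of_le (by isBoundedDefault) ?_
  filter_upwards [eventually_ge_atTop l] with L hL
  have hL₀ : 0 < L := h.1.trans_le hL
  suffices WindowMeanLE (fun t => ENNReal.ofReal (d (y t) (y (t + τ)) ^ (1 : ℝ))) L (ε + ε) by
    simpa using (weylD_le_ofReal_rpow_iff one_pos hL₀ (by positivity)).2 this
  refine ((WindowMeanLE.const hε).add (DensityLE.windowMeanLE_indicator h
    (measurableSet_deviationSet hy) hL) measurable_const hL₀.le hε hε).mono fun t => ?_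
  rw [Real.rpow_one]
  refine (hd _ _).trans ?_
  by_cases ht : t ∈ deviationSet y ε τ
  · simp [ht]
  · simpa [ht] using Or.inr (notMem_deviationSet.1 ht).le

end NearPeriodsAndWeylDistance

section TranslationSeminorm

variable {α β : Type*} [PseudoEMetricSpace α] [PseudoEMetricSpace β] {y : ℝ → α} {σ τ r l : ℝ}

theorem isNearPeriod_one : IsNearPeriod y 1 1 τ :=
  ⟨one_pos, fun L _ ξ => (measure_mono Set.inter_subset_right).trans (by simp)⟩

theorem isNearPeriod_zero (hr : 0 < r) : IsNearPeriod y 1 r 0 :=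
  ⟨one_pos, fun L _ ξ => by simp [deviationSet, hr.not_ge]⟩

/-- The errors with which `τ` is a near-period of `y`, at an arbitrary scale. -/
def nearPeriodErrors (y : ℝ → α) (τ : ℝ) : Set ℝ := {r | 0 < r ∧ ∃ l, IsNearPeriod y l r τ}

theorem nearPeriodErrors_nonempty : (nearPeriodErrors y τ).Nonempty :=
  ⟨1, one_pos, 1, isNearPeriod_one⟩

theorem bddBelow_nearPeriodErrors : BddBelow (nearPeriodErrors y τ) := ⟨0, fun _ h => h.1.le⟩

theorem nearPeriodErrors_add_subset :
    nearPeriodErrors y σ + nearPeriodErrors y τ ⊆ nearPeriodErrors y (σ + τ) := by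
  rintro _ ⟨r, ⟨hr, l, h⟩, r', ⟨hr', l', h'⟩, rfl⟩
  exact ⟨add_pos hr hr', _, h.add h' hr.le hr'.le⟩

theorem nearPeriodErrors_neg : nearPeriodErrors y (-τ) = nearPeriodErrors y τ := by
  ext r
  exact and_congr_right fun _ => exists_congr fun l =>
    ⟨fun h => neg_neg τ ▸ h.neg, IsNearPeriod.neg⟩

/-- The distance in measure between `y` and its translate by `τ`, as a seminorm in `τ`. -/
noncomputable def translationSeminorm (y : ℝ → α) : AddGroupSeminorm ℝ where
  toFun τ := sInf (nearPeriodErrors y τ)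
  map_zero' := le_antisymm (le_of_forall_pos_le_add fun r hr => by
    simpa using csInf_le bddBelow_nearPeriodErrors ⟨hr, 1, isNearPeriod_zero hr⟩)
    (Real.sInf_nonneg fun _ h => h.1.le)
  add_le' σ τ := by
    rw [← csInf_add nearPeriodErrors_nonempty bddBelow_nearPeriodErrors nearPeriodErrors_nonempty
      bddBelow_nearPeriodErrors]
    exact csInf_le_csInf bddBelow_nearPeriodErrors
      (nearPeriodErrors_nonempty.add nearPeriodErrors_nonempty) nearPeriodErrors_add_subset
  neg' τ := by rw [nearPeriodErrors_neg]

theorem IsNearPeriod.translationSeminorm_le (h : IsNearPeriod y l r τ) (hr : 0 < r) :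
    translationSeminorm y τ ≤ r :=
  csInf_le bddBelow_nearPeriodErrors ⟨hr, l, h⟩

theorem exists_isNearPeriod_of_translationSeminorm_lt (h : translationSeminorm y τ < r) :
    ∃ l, IsNearPeriod y l r τ := by
  obtain ⟨s, ⟨_, l, hs⟩, hsr⟩ := exists_lt_of_csInf_lt nearPeriodErrors_nonempty h
  exact ⟨l, hs.mono le_rfl hsr.le⟩

theorem WeylAPInMeasure.continuous_translationSeminorm (hw : WeylAPInMeasure y)
    (hy : StronglyMeasurable y) : Continuous (translationSeminorm y) := by
  refine Metric.continuous_iff.2 fun τ ε hε => ?_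
  obtain ⟨ω, hω, l, h⟩ := hw.exists_isNearPeriod_of_abs_lt hy (half_pos hε)
  refine ⟨ω, hω, fun σ hσ => ?_⟩
  calc dist (translationSeminorm y σ) (translationSeminorm y τ)
      ≤ translationSeminorm y (σ - τ) := abs_sub_map_le_sub _ _ _
    _ ≤ ε / 2 := (h _ hσ).translationSeminorm_le (half_pos hε)
    _ < ε := half_lt_self hε

theorem WeylAPInMeasure.relDense_translationSeminorm_lt (hw : WeylAPInMeasure y) (hr : 0 < r) :
    RelDense {τ | translationSeminorm y τ < r} := by
  obtain ⟨l, h⟩ := hw _ (half_pos hr)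
  exact h.mono fun τ hτ =>
    (IsNearPeriod.translationSeminorm_le hτ (half_pos hr)).trans_lt (half_lt_self hr)

theorem translationSeminorm_prodMk_le (y : ℝ → α) (z : ℝ → β) (τ : ℝ) :
    translationSeminorm (fun t => (y t, z t)) τ ≤
      translationSeminorm y τ + translationSeminorm z τ := by
  refine le_of_forall_pos_le_add fun ε hε => ?_
  obtain ⟨l, h⟩ := exists_isNearPeriod_of_translationSeminorm_lt
    (lt_add_of_pos_right (translationSeminorm y τ) (half_pos hε))
  obtain ⟨l', h'⟩ := exists_isNearPeriod_of_translationSeminorm_lt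
    (lt_add_of_pos_right (translationSeminorm z τ) (half_pos hε))
  have hy := apply_nonneg (translationSeminorm y) τ
  have hz := apply_nonneg (translationSeminorm z) τ
  have hyz : IsNearPeriod (fun t => (y t, z t)) (max l l')
      (translationSeminorm y τ + ε / 2 + (translationSeminorm z τ + ε / 2)) τ := by
    refine (DensityLE.union h h' (by positivity) (by positivity)).mono le_rfl ?_ le_rfl
    rw [deviationSet_prodMk]
    exact Set.union_subset_union (deviationSet_anti (by linarith)) (deviationSet_anti (by linarith))
  linarith [hyz.translationSeminorm_le (by positivity)]

theorem Controls.tendsto_translationSeminorm {X : ℝ → β} (h : Controls X y) {ι : Type*}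
    {𝓕 : Filter ι} {τ : ι → ℝ} (hτ : Tendsto (fun j => translationSeminorm X (τ j)) 𝓕 (𝓝 0)) :
    Tendsto (fun j => translationSeminorm y (τ j)) 𝓕 (𝓝 0) := by
  refine tendsto_order.2 ⟨fun a ha => Eventually.of_forall fun j => ha.trans_le (apply_nonneg _ _),
    fun ε hε => ?_⟩
  obtain ⟨δ, hδ, hδ'⟩ := h _ (half_pos hε) _ (half_pos hε)
  filter_upwards [hτ.eventually_lt_const hδ] with j hj
  obtain ⟨l, hl⟩ := exists_isNearPeriod_of_translationSeminorm_lt hj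
  obtain ⟨L, hL⟩ := hδ' l
  exact (IsNearPeriod.translationSeminorm_le (hL _ hl) (half_pos hε)).trans_lt (half_lt_self hε)

end TranslationSeminorm

section UniformIntegrability

theorem exists_nat_lintegral_tsub_rpow_le {Ω : Type*} [MeasurableSpace Ω] {μ : Measure Ω}
    {h : Ω → ℝ≥0∞} (hm : Measurable h) {p : ℝ} (hp : 0 < p) (hfin : ∫⁻ x, h x ^ p ∂μ ≠ ∞)
    {ε : ℝ≥0∞} (hε : 0 < ε) : ∃ n : ℕ, ∫⁻ x, (h x - n) ^ p ∂μ ≤ ε := by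
  have hlim : Tendsto (fun n : ℕ => ∫⁻ x, (h x - n) ^ p ∂μ) atTop (𝓝 (∫⁻ _, 0 ∂μ)) := by
    refine tendsto_lintegral_of_dominated_convergence (fun x => h x ^ p)
      (fun n => (hm.sub_const _).pow_const p)
      (fun n => Eventually.of_forall fun x =>
        ENNReal.rpow_le_rpow tsub_le_self hp.le) hfin ?_
    filter_upwards [ae_lt_top (hm.pow_const p) hfin] with x hx
    obtain ⟨N, hN⟩ := ENNReal.exists_nat_gt ((ENNReal.rpow_lt_top_iff_of_pos hp).1 hx).ne
    refine tendsto_const_nhds.congr' ?_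
    filter_upwards [eventually_ge_atTop N] with n hn
    rw [tsub_eq_zero_of_le (hN.le.trans (by exact_mod_cast hn)), ENNReal.zero_rpow_of_pos hp]
  rw [lintegral_zero] at hlim
  exact (hlim.eventually_le_const hε).exists

/-- Uniform `p`-integrability over windows: truncating `h` at a high level `n` leaves a remainder of
small `p`-th mean on all windows of some length. -/
def UniformlyPIntegrable (h : ℝ → ℝ≥0∞) (p : ℝ) : Prop :=
  ∀ ε > 0, ∃ n : ℕ, ∃ l > 0, WindowMeanLE (fun t => (h t - n) ^ p) l ε

theorem WindowMeanLE.lintegral_Icc_ne_top {φ : ℝ → ℝ≥0∞} {l C : ℝ} (h : WindowMeanLE φ l C)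
    (hl : 0 < l) (R : ℝ) : ∫⁻ t in Set.Icc 0 R, φ t ≠ ∞ := by
  have hbound := (h.mono_right hl.le (le_max_left C 0)).two_mul_of_le hl (le_max_right C 0)
    (le_max_left l R) 0
  refine ne_top_of_le_ne_top ENNReal.ofReal_ne_top (le_trans (lintegral_mono_set ?_) hbound)
  rw [zero_add]
  exact Set.Icc_subset_Icc_right (le_max_right _ _)

theorem lintegral_rpow_le_of_le_add {Ω : Type*} [MeasurableSpace Ω] {μ : Measure Ω}
    {u v w : Ω → ℝ≥0∞} (hv : Measurable v) {p : ℝ} (hp : 1 ≤ p) (h : ∀ x, u x ≤ v x + w x) :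
    ∫⁻ x, u x ^ p ∂μ ≤ 2 ^ (p - 1) * (∫⁻ x, v x ^ p ∂μ + ∫⁻ x, w x ^ p ∂μ) := by
  rw [← lintegral_add_left (hv.pow_const p),
    ← lintegral_const_mul' _ _ (ENNReal.rpow_ne_top_of_nonneg (sub_nonneg.2 hp) (by simp))]
  exact lintegral_mono fun x => (ENNReal.rpow_le_rpow (h x) (by positivity)).trans
    (ENNReal.rpow_add_le_mul_rpow_add_rpow _ _ hp)

/-- An almost period carries any window into a fixed compact one, where the truncation remainder is
small because `h` is `p`-integrable there. -/
theorem uniformlyPIntegrable_of_relDense {h : ℝ → ℝ≥0∞} {D : ℝ → ℝ → ℝ≥0∞} {p l₀ C : ℝ}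
    (hm : Measurable h) (hp : 1 ≤ p) (hl₀ : 0 < l₀)
    (hC : WindowMeanLE (fun t => h t ^ p) l₀ C) (hD : ∀ t τ, h t ≤ h (t + τ) + D τ t)
    (hdense : ∀ κ > 0, ∃ l > 0, RelDense {τ | WindowMeanLE (fun t => D τ t ^ p) l κ}) :
    UniformlyPIntegrable h p := by
  intro ε hε
  have hK : ENNReal.ofReal (2 ^ (p - 1)) = 2 ^ (p - 1) := by
    rw [← ENNReal.ofReal_rpow_of_pos two_pos, ENNReal.ofReal_ofNat]
  set κ := ε / (2 ^ (p - 1) * 2)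
  have hκ : 0 < κ := by positivity
  obtain ⟨l, hl, a, -, hdense⟩ := hdense κ hκ
  obtain ⟨n, hn⟩ := exists_nat_lintegral_tsub_rpow_le hm (zero_lt_one.trans_le hp)
    (hC.lintegral_Icc_ne_top hl₀ (a + l)) (ε := ENNReal.ofReal (κ * l))
    (ENNReal.ofReal_pos.2 (by positivity))
  refine ⟨n, l, hl, fun ξ => ?_⟩
  obtain ⟨τ, ⟨hτ₁, hτ₂⟩, hτ⟩ := hdense (-ξ)
  have hshift : ∫⁻ t in Set.Icc ξ (ξ + l), (h (t + τ) - n) ^ p ≤ ENNReal.ofReal (κ * l) := by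
    rw [(measurePreserving_add_right volume τ).setLIntegral_comp_emb
      (MeasurableEquiv.addRight τ).measurableEmbedding (fun t => (h t - n) ^ p),
      Set.image_add_const_Icc]
    exact (lintegral_mono_set (Set.Icc_subset_Icc (by linarith) (by linarith))).trans hn
  have htrunc (t : ℝ) : h t - n ≤ h (t + τ) - n + D τ t :=
    (tsub_le_tsub_right (hD t τ) _).trans add_tsub_le_tsub_add
  calc ∫⁻ t in Set.Icc ξ (ξ + l), (h t - n) ^ p
      ≤ 2 ^ (p - 1) * ((∫⁻ t in Set.Icc ξ (ξ + l), (h (t + τ) - n) ^ p) +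
          ∫⁻ t in Set.Icc ξ (ξ + l), D τ t ^ p) :=
        lintegral_rpow_le_of_le_add ((hm.comp (measurable_add_const τ)).sub_const _) hp htrunc
    _ ≤ 2 ^ (p - 1) * (ENNReal.ofReal (κ * l) + ENNReal.ofReal (κ * l)) := by
        gcongr
        exact hτ ξ
    _ = ENNReal.ofReal (ε * l) := by
        rw [← hK, ← ENNReal.ofReal_add (by positivity) (by positivity),
          ← ENNReal.ofReal_mul (by positivity)]
        congr 1
        simp only [κ]
        field_simp
        ring

theorem UniformlyPIntegrable.mono {h h' : ℝ → ℝ≥0∞} {p : ℝ} (hh : UniformlyPIntegrable h' p)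
    (hp : 0 ≤ p) (hle : ∀ t, h t ≤ h' t) : UniformlyPIntegrable h p := by
  intro ε hε
  obtain ⟨n, l, hl, hn⟩ := hh ε hε
  exact ⟨n, l, hl, hn.mono fun t => by gcongr; exact hle t⟩

variable {U : Type*} [PseudoEMetricSpace U] {f : ℝ → U} {p : ℝ}

theorem edist_rpow_le_of_truncation (hp : 1 ≤ p) (x₀ : U) (n : ℕ) (δ t τ : ℝ) :
    edist (f t) (f (t + τ)) ^ p ≤ 4 ^ (p - 1) * (ENNReal.ofReal δ ^ p +
      (2 * n) ^ p * (deviationSet f δ τ).indicator 1 t + (edist (f t) x₀ - n) ^ p +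
      (edist (f (t + τ)) x₀ - n) ^ p) := by
  have hp₀ : 0 < p := by positivity
  set b : ℝ≥0∞ := 2 * n * (deviationSet f δ τ).indicator 1 t
  have hb : b ^ p = (2 * n) ^ p * (deviationSet f δ τ).indicator 1 t := by
    by_cases ht : t ∈ deviationSet f δ τ <;> simp [b, ht, hp₀]
  have hsplit : edist (f t) (f (t + τ)) ≤
      ENNReal.ofReal δ + b + (edist (f t) x₀ - n) + (edist (f (t + τ)) x₀ - n) := by
    by_cases ht : t ∈ deviationSet f δ τ
    · calc edist (f t) (f (t + τ)) ≤ edist (f t) x₀ + edist (f (t + τ)) x₀ :=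
            edist_triangle_right _ _ _
        _ ≤ (n + (edist (f t) x₀ - n)) + (n + (edist (f (t + τ)) x₀ - n)) :=
            add_le_add le_add_tsub le_add_tsub
        _ = b + (edist (f t) x₀ - n) + (edist (f (t + τ)) x₀ - n) := by
            simp only [b, ht, Set.indicator_of_mem, Pi.one_apply, mul_one]
            ring
        _ ≤ _ := by
            gcongr
            exact le_add_self
    · exact (notMem_deviationSet.1 ht).le.trans (by simp only [add_assoc, le_self_add])
  rw [← hb]
  refine (ENNReal.rpow_le_rpow hsplit hp₀.le).trans ?_
  simpa [Fin.sum_univ_four] using ENNReal.rpow_sum_le_const_mul_sum_rpow Finset.univ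
    ![ENNReal.ofReal δ, b, edist (f t) x₀ - n, edist (f (t + τ)) x₀ - n] hp

/-- The four terms bound `edist (f t) (f (t + τ))` off the deviation set, below the truncation level
on it, and by the two truncation remainders. -/
theorem IsNearPeriod.windowMeanLE_edist_rpow {x₀ : U} {l L δ c τ : ℝ} {n : ℕ}
    (h : IsNearPeriod f l δ τ) (hf : StronglyMeasurable f) (hp : 1 ≤ p) (hlL : l ≤ L) (hδ : 0 ≤ δ)
    (hc : 0 ≤ c) (hδc : δ ^ p ≤ c) (hnc : (2 * n) ^ p * δ ≤ c)
    (htail : WindowMeanLE (fun t => (edist (f t) x₀ - n) ^ p) L c) :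
    WindowMeanLE (fun t => edist (f t) (f (t + τ)) ^ p) L (4 ^ (p - 1) * (4 * c)) := by
  have hp₀ : 0 ≤ p := by positivity
  have hL : 0 ≤ L := h.1.le.trans hlL
  have hK : ENNReal.ofReal (4 ^ (p - 1)) = 4 ^ (p - 1) := by
    rw [← ENNReal.ofReal_rpow_of_pos (by norm_num), ENNReal.ofReal_ofNat]
  have hN : ENNReal.ofReal ((2 * n) ^ p) = (2 * n) ^ p := by
    rw [← ENNReal.ofReal_rpow_of_nonneg (by positivity) hp₀, ENNReal.ofReal_mul zero_le_two,
      ENNReal.ofReal_ofNat, ENNReal.ofReal_natCast]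
  have hconst : WindowMeanLE (fun _ => ENNReal.ofReal δ ^ p) L c :=
    (WindowMeanLE.const hc).mono fun _ => by
      rw [ENNReal.ofReal_rpow_of_nonneg hδ hp₀]
      gcongr
  have hdev : WindowMeanLE
      (fun t => ENNReal.ofReal ((2 * n) ^ p) * (deviationSet f δ τ).indicator 1 t) L c :=
    ((DensityLE.windowMeanLE_indicator h (measurableSet_deviationSet hf) hlL).const_mul
      (by positivity)).mono_right hL hnc
  have hdevm : Measurable
      fun t => ENNReal.ofReal ((2 * n) ^ p) * (deviationSet f δ τ).indicator 1 t :=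
    (measurable_one.indicator (measurableSet_deviationSet hf)).const_mul _
  have hm : Measurable fun t => (edist (f t) x₀ - n) ^ p :=
    ((hf.edist stronglyMeasurable_const).measurable.sub_const _).pow_const p
  have hsum := (((hconst.add hdev measurable_const hL hc hc).add htail
    (measurable_const.add hdevm) hL (by positivity) hc).add (htail.comp_add τ)
    ((measurable_const.add hdevm).add hm) hL (by positivity) hc).const_mul
      (a := 4 ^ (p - 1)) (by positivity)
  rw [hK, hN, show c + c + c + c = 4 * c by ring] at hsum
  exact hsum.mono fun t => edist_rpow_le_of_truncation hp x₀ n δ t τ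

theorem exists_pos_rpow_le_mul_le {c : ℝ} (N : ℝ) (hp : 0 < p) (hc : 0 < c) :
    ∃ δ > 0, δ ^ p ≤ c ∧ N * δ ≤ c := by
  have hpow : Tendsto (fun δ : ℝ => δ ^ p) (𝓝[>] 0) (𝓝 0) := by
    simpa [Real.zero_rpow hp.ne'] using
      ((Real.continuousAt_rpow_const 0 p (Or.inr hp.le)).tendsto).mono_left nhdsWithin_le_nhds
  have hmul : Tendsto (fun δ : ℝ => N * δ) (𝓝[>] 0) (𝓝 0) := by
    simpa using ((continuous_const_mul N).tendsto 0).mono_left nhdsWithin_le_nhds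
  have hpos : ∀ᶠ δ : ℝ in 𝓝[>] 0, 0 < δ := self_mem_nhdsWithin
  exact (hpos.and ((hpow.eventually_le_const hc).and
    (hmul.eventually_le_const hc))).exists

/-- Vitali: convergence in measure and uniform integrability give convergence in `p`-th mean. -/
theorem UniformlyPIntegrable.exists_windowMeanLE_of_isNearPeriod {x₀ : U}
    (h : UniformlyPIntegrable (fun t => edist (f t) x₀) p) (hf : StronglyMeasurable f)
    (hp : 1 ≤ p) {ε : ℝ} (hε : 0 < ε) :
    ∃ δ > 0, ∃ l₀ > 0, ∀ l τ, IsNearPeriod f l δ τ →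
      WindowMeanLE (fun t => edist (f t) (f (t + τ)) ^ p) (max l₀ l) ε := by
  set c : ℝ := ε / (4 ^ (p - 1) * 4)
  have hc : 0 < c := by positivity
  obtain ⟨n, l₀, hl₀, htail⟩ := h (c / 2) (by positivity)
  obtain ⟨δ, hδ, hδc, hnc⟩ := exists_pos_rpow_le_mul_le ((2 * n) ^ p) (zero_lt_one.trans_le hp) hc
  refine ⟨δ, hδ, l₀, hl₀, fun l τ hτ => ?_⟩
  have htail' := htail.two_mul_of_le hl₀ (by positivity) (le_max_left l₀ l)
  rw [mul_div_cancel₀ c two_ne_zero] at htail'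
  have hmean := hτ.windowMeanLE_edist_rpow hf hp (le_max_right l₀ l) hδ.le hc.le hδc hnc htail'
  rwa [← mul_assoc, mul_div_cancel₀ ε (by positivity)] at hmean

end UniformIntegrability

section AECongr

variable {α : Type*} {f f' g g' : ℝ → α}

theorem ae_eq_comp_add_right (h : f =ᵐ[volume] f') (τ : ℝ) :
    (fun t => f (t + τ)) =ᵐ[volume] fun t => f' (t + τ) :=
  (measurePreserving_add_right volume τ).quasiMeasurePreserving.ae_eq_comp h

theorem weylD_congr_ae (d : α → α → ℝ) (p l : ℝ) (hf : f =ᵐ[volume] f') (hg : g =ᵐ[volume] g') :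
    weylD d p l f g = weylD d p l f' g' := by
  have hd : (fun t => ENNReal.ofReal (d (f t) (g t) ^ p)) =ᵐ[volume]
      fun t => ENNReal.ofReal (d (f' t) (g' t) ^ p) := by
    filter_upwards [hf, hg] with t ht ht'
    rw [ht, ht']
  simp only [weylD, lintegral_congr_ae (ae_restrict_of_ae hd)]

theorem WMod_congr_ae (d : α → α → ℝ) (h : f =ᵐ[volume] f') : WMod d f = WMod d f' := by
  simp only [WMod, weylDinf, weylD_congr_ae d 1 _ h (ae_eq_comp_add_right h _)]

theorem MemWp.congr_ae [TopologicalSpace α] {d : α → α → ℝ} {p : ℝ} {x₀ : α}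
    (hf : MemWp d p x₀ f) (h : f =ᵐ[volume] f') : MemWp d p x₀ f' := by
  obtain ⟨⟨hfm, C, hC⟩, hap⟩ := hf
  have hd : (fun t => ENNReal.ofReal (d (f t) x₀ ^ p)) =ᵐ[volume]
      fun t => ENNReal.ofReal (d (f' t) x₀ ^ p) := by
    filter_upwards [h] with t ht
    rw [ht]
  simp only [lintegral_congr_ae (ae_restrict_of_ae hd)] at hC
  simp only [APeriodsL, weylD_congr_ae d p _ h (ae_eq_comp_add_right h _)] at hap
  exact ⟨⟨hfm.congr h, C, hC⟩, hap⟩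

end AECongr

section Distances

theorem ofReal_bdist {α : Type*} [PseudoMetricSpace α] (x y : α) :
    ENNReal.ofReal (bdist x y) = min 1 (edist x y) := by
  rw [bdist, ENNReal.ofReal_min, ENNReal.ofReal_one, edist_dist]

variable {α : Type*} [MetricSpace α] {A B : Closeds α}

theorem ofReal_clDist (A B : Closeds α) : ENNReal.ofReal (clDist A B) = min 1 (edist A B) :=
  ENNReal.ofReal_toReal (ne_top_of_le_ne_top ENNReal.one_ne_top (min_le_left _ _))

theorem ofReal_clbDist (h : edist A B ≠ ∞) : ENNReal.ofReal (clbDist A B) = edist A B :=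
  ENNReal.ofReal_toReal h

theorem ofReal_clbDist_rpow (h : edist A B ≠ ∞) {p : ℝ} (hp : 0 ≤ p) :
    ENNReal.ofReal (clbDist A B ^ p) = edist A B ^ p := by
  rw [← ENNReal.ofReal_rpow_of_nonneg (x := clbDist A B) ENNReal.toReal_nonneg hp,
    ofReal_clbDist h]

theorem edist_le_edist_closeds_singleton {x x₀ : α} (hx : x ∈ A) :
    edist x x₀ ≤ edist A {x₀} :=
  Metric.infEDist_singleton.ge.trans (Metric.infEDist_le_hausdorffEDist_of_mem hx)

end Distances

section Modules

open FourierTransform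

variable {α β γ : Type*} [PseudoEMetricSpace α] [PseudoEMetricSpace β] [PseudoEMetricSpace γ]
  {y : ℝ → α} {d : α → α → ℝ}

theorem tendsto_weylDinf_iff_translationSeminorm (hy : StronglyMeasurable y)
    (hd : ∀ s t, ENNReal.ofReal (d (y s) (y t)) = min 1 (edist (y s) (y t))) {ι : Type*}
    {𝓛 : Filter ι} {τ : ι → ℝ} :
    Tendsto (fun j => weylDinf d 1 y (fun t => y (t + τ j))) 𝓛 (𝓝 0) ↔
      Tendsto (fun j => translationSeminorm y (τ j)) 𝓛 (𝓝 0) := by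
  refine ⟨fun h => tendsto_order.2 ⟨fun a ha =>
    Eventually.of_forall fun j => ha.trans_le (apply_nonneg _ _), fun ε hε => ?_⟩,
    fun h => ENNReal.tendsto_nhds_zero.2 fun ε hε => ?_⟩
  · have hr : 0 < min (ε / 2) 1 := by positivity
    filter_upwards [h.eventually_lt_const (ENNReal.ofReal_pos.2 (mul_pos hr (half_pos hr)))]
      with j hj
    obtain ⟨l, hl⟩ := exists_isNearPeriod_of_weylDinf_lt hy (fun s t => (hd s t).ge) hr
      (min_le_right _ _) hj
    calc translationSeminorm y (τ j) ≤ min (ε / 2) 1 := hl.translationSeminorm_le hr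
      _ ≤ ε / 2 := min_le_left _ _
      _ < ε := half_lt_self hε
  · obtain ⟨r, hr, hrε⟩ := ENNReal.lt_iff_exists_nnreal_btwn.1 hε
    have hr : 0 < (r : ℝ) := by exact_mod_cast hr
    filter_upwards [h.eventually_lt_const (half_pos hr)] with j hj
    obtain ⟨l, hl⟩ := exists_isNearPeriod_of_translationSeminorm_lt hj
    calc weylDinf d 1 y (fun t => y (t + τ j))
        ≤ ENNReal.ofReal (r / 2 + r / 2) :=
          hl.weylDinf_le hy (fun s t => (hd s t).le) (by positivity)
      _ = r := by rw [add_halves, ENNReal.ofReal_coe_nnreal]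
      _ ≤ ε := hrε.le

theorem two_pi_mul_mem_WMod_iff (hy : StronglyMeasurable y)
    (hd : ∀ s t, ENNReal.ofReal (d (y s) (y t)) = min 1 (edist (y s) (y t))) {x : ℝ} :
    2 * Real.pi * x ∈ WMod d y ↔
      Tendsto (fun τ => (𝐞 (x * τ) : ℂ)) (comap (translationSeminorm y) (𝓝 0)) (𝓝 1) := by
  have hexp (τ : ℝ) :
      Complex.exp (Complex.I * ((2 * Real.pi * x * τ : ℝ) : ℂ)) = (𝐞 (x * τ) : ℂ) := by
    rw [Real.fourierChar_apply, mul_comm, mul_assoc (2 * Real.pi)]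
  simp only [WMod, Set.mem_ofPred_eq, hexp, tendsto_weylDinf_iff_translationSeminorm hy hd,
    tendsto_iff_seq_tendsto (k := comap _ _), tendsto_comap_iff, Function.comp_def]

theorem two_pi_mul_mem_WMod_of_norm_fourierChar_sub_one_le (hy : StronglyMeasurable y)
    (hd : ∀ s t, ENNReal.ofReal (d (y s) (y t)) = min 1 (edist (y s) (y t))) {x C : ℝ}
    (h : ∀ τ, ‖(𝐞 (x * τ) : ℂ) - 1‖ ≤ C * translationSeminorm y τ) :
    2 * Real.pi * x ∈ WMod d y := by
  rw [two_pi_mul_mem_WMod_iff hy hd, tendsto_iff_norm_sub_tendsto_zero]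
  refine squeeze_zero (fun _ => norm_nonneg _) h ?_
  simpa using (tendsto_comap (f := translationSeminorm y) (x := 𝓝 0)).const_mul C

theorem WMod_subset_add_of_controls {z : ℝ → β} {w : ℝ → γ} {d₂ : β → β → ℝ} {d₃ : γ → γ → ℝ}
    (hy : StronglyMeasurable y) (hz : StronglyMeasurable z) (hw : StronglyMeasurable w)
    (hd : ∀ s t, ENNReal.ofReal (d (y s) (y t)) = min 1 (edist (y s) (y t)))
    (hd₂ : ∀ s t, ENNReal.ofReal (d₂ (z s) (z t)) = min 1 (edist (z s) (z t)))
    (hd₃ : ∀ s t, ENNReal.ofReal (d₃ (w s) (w t)) = min 1 (edist (w s) (w t)))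
    (hyap : WeylAPInMeasure y) (hzap : WeylAPInMeasure z)
    (h : Controls (fun t => (y t, z t)) w) : WMod d₃ w ⊆ WMod d y + WMod d₂ z := by
  intro lam hlam
  obtain ⟨x, rfl⟩ : ∃ x, 2 * Real.pi * x = lam := ⟨lam / (2 * Real.pi), by field_simp⟩
  have hphase : ∀ᶠ τ in comap (translationSeminorm fun t => (y t, z t)) (𝓝 0),
      ‖(𝐞 (x * τ) : ℂ) - 1‖ < 1 / 2 := by
    have hle : comap (translationSeminorm fun t => (y t, z t)) (𝓝 0) ≤
        comap (translationSeminorm w) (𝓝 0) :=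
      tendsto_iff_comap.1 (h.tendsto_translationSeminorm tendsto_comap)
    simpa only [dist_eq_norm] using
      Metric.tendsto_nhds.1 (((two_pi_mul_mem_WMod_iff hw hd₃).1 hlam).mono_left hle) _ one_half_pos
  obtain ⟨δ, hδ, hphase⟩ := (Metric.nhds_basis_ball.comap _).eventually_iff.1 hphase
  obtain ⟨ξ, C, hξ⟩ := exists_fourierChar_splitting (hyap.continuous_translationSeminorm hy)
    (hzap.continuous_translationSeminorm hz) (fun _ => hyap.relDense_translationSeminorm_lt)
    (fun _ => hzap.relDense_translationSeminorm_lt) (half_pos hδ) fun τ hyτ hzτ => (hphase (by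
      rw [Set.mem_preimage, mem_ball_zero_iff, Real.norm_of_nonneg (apply_nonneg _ _)]
      linarith [translationSeminorm_prodMk_le y z τ])).le
  rw [← add_sub_cancel ξ x, mul_add]
  exact Set.add_mem_add
    (two_pi_mul_mem_WMod_of_norm_fourierChar_sub_one_le hy hd fun τ => (hξ τ).1)
    (two_pi_mul_mem_WMod_of_norm_fourierChar_sub_one_le hz hd₂ fun τ => (hξ τ).2)

end Modules

section Membership

variable {U : Type*} {p : ℝ} {x₀ : U}

theorem memWp_dist_of_uniformlyPIntegrable [PseudoMetricSpace U] {f : ℝ → U}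
    (hw : WeylAPInMeasure f) (hf : StronglyMeasurable f) (hp : 1 ≤ p) {C : ℝ}
    (hC : WindowMeanLE (fun t => edist (f t) x₀ ^ p) 1 C)
    (hi : UniformlyPIntegrable (fun t => edist (f t) x₀) p) : MemWp dist p x₀ f := by
  have hp₀ : 0 < p := by positivity
  have hdist (x y : U) : ENNReal.ofReal (dist x y ^ p) = edist x y ^ p := by
    rw [edist_dist, ENNReal.ofReal_rpow_of_nonneg dist_nonneg hp₀.le]
  refine ⟨⟨hf.aestronglyMeasurable, C, fun ξ => by simpa [hdist] using hC ξ⟩, fun ε hε => ?_⟩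
  obtain ⟨δ, hδ, l₀, hl₀, hmean⟩ :=
    hi.exists_windowMeanLE_of_isNearPeriod hf hp (ε := (ε / 2) ^ p) (by positivity)
  obtain ⟨l, hdense⟩ := hw δ hδ
  have hL : 0 < max l₀ l := lt_max_of_lt_left hl₀
  refine ⟨max l₀ l, hL, hdense.mono fun τ hτ => ?_⟩
  have hD := (weylD_le_ofReal_rpow_iff (d := dist) (f := f) (g := fun t => f (t + τ)) hp₀ hL
    (Real.rpow_nonneg (half_pos hε).le p)).2 (by simpa only [hdist] using hmean l τ hτ)
  rw [one_div, Real.rpow_rpow_inv (by positivity) hp₀.ne'] at hD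
  exact hD.trans_lt ((ENNReal.ofReal_lt_ofReal_iff hε).2 (half_lt_self hε))

variable [MetricSpace U] {F : ℝ → Closeds U}

theorem edist_closeds_ne_top (hfin : ∀ t, edist (F t) {x₀} ≠ ∞) (s t : ℝ) :
    edist (F s) (F t) ≠ ∞ :=
  ne_top_of_le_ne_top (ENNReal.add_ne_top.2 ⟨hfin s, hfin t⟩) (edist_triangle_right _ _ _)

theorem MemWp.uniformlyPIntegrable_closeds
    (hF : MemWp clbDist p ({x₀} : Closeds U) F) (hFm : StronglyMeasurable F)
    (hfin : ∀ t, edist (F t) {x₀} ≠ ∞) (hp : 1 ≤ p) {C : ℝ}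
    (hC : WindowMeanLE (fun t => edist (F t) {x₀} ^ p) 1 C) :
    UniformlyPIntegrable (fun t => edist (F t) {x₀}) p := by
  have hp₀ : 0 < p := by positivity
  refine uniformlyPIntegrable_of_relDense (D := fun τ t => edist (F t) (F (t + τ)))
    (hFm.edist stronglyMeasurable_const).measurable hp one_pos hC
    (fun t τ => (edist_triangle _ (F (t + τ)) _).trans_eq (add_comm _ _)) fun κ hκ => ?_
  obtain ⟨l, hl, hdense⟩ := hF.2 (κ ^ (1 / p)) (by positivity)
  refine ⟨l, hl, hdense.mono fun τ hτ => ?_⟩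
  simpa only [Set.mem_ofPred_eq, ofReal_clbDist_rpow (edist_closeds_ne_top hfin _ _) hp₀.le] using
    (weylD_le_ofReal_rpow_iff hp₀ hl hκ.le).1 (le_of_lt hτ)

theorem MemWp.memWp_dist_of_forall_mem
    (hF : MemWp clbDist p ({x₀} : Closeds U) F) (hFm : StronglyMeasurable F)
    (hfin : ∀ t, edist (F t) {x₀} ≠ ∞) (hp : 1 ≤ p) {f : ℝ → U}
    (hw : WeylAPInMeasure f) (hf : StronglyMeasurable f) (hfF : ∀ t, f t ∈ F t) :
    MemWp dist p x₀ f := by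
  have hp₀ : 0 ≤ p := by positivity
  have hle (t : ℝ) : edist (f t) x₀ ≤ edist (F t) {x₀} :=
    edist_le_edist_closeds_singleton (hfF t)
  obtain ⟨C, hC⟩ := hF.1.2
  have hC' : WindowMeanLE (fun t => edist (F t) {x₀} ^ p) 1 C := by
    simpa [WindowMeanLE, ofReal_clbDist_rpow (hfin _) hp₀] using hC
  exact memWp_dist_of_uniformlyPIntegrable hw hf hp (hC'.mono fun t => by gcongr; exact hle t)
    ((hF.uniformlyPIntegrable_closeds hFm hfin hp hC').mono hp₀ hle)

end Membership

section Selection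

variable {U : Type*} [MetricSpace U] {x₀ : U} {p : ℝ} {F : ℝ → Closeds U} {g : ℝ → U} {η : ℝ → ℝ}

theorem exists_stronglyMeasurable_ae_eq_edist_ne_top {α : Type*} [EMetricSpace α] {y : ℝ → α}
    (hy : AEStronglyMeasurable y volume) {a : α} (hfin : ∀ t, edist (y t) a ≠ ∞) :
    ∃ y', StronglyMeasurable y' ∧ y =ᵐ[volume] y' ∧ ∀ t, edist (y' t) a ≠ ∞ := by
  borelize α
  obtain ⟨y', hy', hrange, hae⟩ := hy.exists_stronglyMeasurable_range_subset
    (Metric.isOpen_eball (x := a) (ε := ∞)).measurableSet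
    ⟨a, Metric.mem_eball_self ENNReal.zero_lt_top⟩
    (Eventually.of_forall fun t => Metric.mem_eball.2 (hfin t).lt_top)
  exact ⟨y', hy', hae, fun t => (hrange t).ne⟩

theorem exists_selection_of_stronglyMeasurable [CompleteSpace U] (hg : MemWp bdist 1 x₀ g)
    (hgm : StronglyMeasurable g)
    (hF : MemWp clbDist p ({x₀} : Closeds U) F) (hFm : StronglyMeasurable F)
    (hfin : ∀ t, edist (F t) {x₀} ≠ ∞) (hp : 1 ≤ p)
    (hη : MonotoneOn η (Set.Ici 0)) (hη₀ : 0 ≤ η 0) (hηpos : ∀ t > 0, 0 < η t) :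
    ∃ f, MemWp dist p x₀ f ∧ WMod bdist f ⊆ WMod bdist g + WMod clDist F ∧ (∀ t, f t ∈ F t) ∧
      ∀ t, dist (f t) (g t) ≤
        Metric.infDist (g t) (F t) + η (Metric.infDist (g t) (F t)) := by
  have hgap : WeylAPInMeasure g := hg.weylAPInMeasure hgm (fun _ _ => (ofReal_bdist _ _).ge) one_pos
  have hFap : WeylAPInMeasure F := hF.weylAPInMeasure hFm (fun s t =>
    (min_le_right _ _).trans (ofReal_clbDist (edist_closeds_ne_top hfin s t)).ge) (by positivity)
  have hX : WeylAPInMeasure fun t => (g t, F t) := hgap.prodMk hFap hFm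
  obtain ⟨f, hfm, hXf, hfF, hfg⟩ := exists_selection_dist_le_add_comp hX hgm hFm
    ((Controls.refl _).comp_lipschitzWith LipschitzWith.prod_fst)
    ((Controls.refl _).comp_lipschitzWith LipschitzWith.prod_snd)
    (fun t => Metric.nonempty_of_hausdorffEDist_ne_top (Set.singleton_nonempty x₀)
      (Metric.hausdorffEDist_comm.trans_ne (hfin t))) hη hη₀ hηpos
  exact ⟨f, hF.memWp_dist_of_forall_mem hFm hfin hp (hXf.weylAPInMeasure hX) hfm hfF,
    WMod_subset_add_of_controls hgm hFm hfm (fun _ _ => ofReal_bdist _ _)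
      (fun _ _ => ofReal_clDist _ _) (fun _ _ => ofReal_bdist _ _) hgap hFap hXf, hfF, hfg⟩

end Selection

open TopologicalSpace in
/-- **Theorem 1, second part (selection theorem for `W_p(ℝ,U)`).**
If moreover `F ∈ W_p(ℝ, cl_b U)` for some `p ≥ 1`, then the selection `f` can be chosen
in `W_p(ℝ,U)`. -/
theorem weyl_ap_selection_order_p {U : Type*} [MetricSpace U] [CompleteSpace U] (x₀ : U)
    (g : ℝ → U) (hg : MemWp bdist 1 x₀ g)
    (p : ℝ) (hp : 1 ≤ p)
    (F : ℝ → Closeds U) (hFne : ∀ t : ℝ, (F t : Set U).Nonempty)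
    (hFbdd : ∀ t : ℝ, Bornology.IsBounded (F t : Set U))
    (hF : MemWp clbDist p (⟨{x₀}, isClosed_singleton⟩ : Closeds U) F)
    (η : ℝ → ℝ) (hηmono : StrictMonoOn η (Set.Ici 0)) (hη0 : η 0 = 0)
    (hηpos : ∀ t > (0 : ℝ), 0 < η t) :
    ∃ f : ℝ → U, MemWp dist p x₀ f ∧
      WMod bdist f ⊆ WMod bdist g + WMod clDist F ∧
      (∀ᵐ t ∂(volume : Measure ℝ), f t ∈ (F t : Set U)) ∧
      (∀ᵐ t ∂(volume : Measure ℝ),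
        dist (f t) (g t) ≤
          Metric.infDist (g t) (F t) + η (Metric.infDist (g t) (F t))) := by
  have hfin (t : ℝ) : edist (F t) {x₀} ≠ ∞ :=
    Metric.hausdorffEDist_ne_top_of_nonempty_of_bounded (hFne t) (Set.singleton_nonempty x₀)
      (hFbdd t) Bornology.isBounded_singleton
  obtain ⟨g', hgm, hgg'⟩ := hg.1.1
  obtain ⟨F', hFm, hFF', hfin'⟩ := exists_stronglyMeasurable_ae_eq_edist_ne_top hF.1.1 hfin
  obtain ⟨f, hf, hmod, hfF, hfg⟩ := exists_selection_of_stronglyMeasurable (hg.congr_ae hgg') hgm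
    (hF.congr_ae hFF') hFm hfin' hp hηmono.monotoneOn hη0.ge hηpos
  refine ⟨f, hf, ?_, ?_, ?_⟩
  · rwa [WMod_congr_ae bdist hgg', WMod_congr_ae clDist hFF']
  · filter_upwards [hFF'] with t hFt
    exact hFt ▸ hfF t
  · filter_upwards [hFF', hgg'] with t hFt hgt
    exact hFt ▸ hgt ▸ hfg t
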